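/- arXiv:0909.2347 — 6 statements merged into one kernel-verified Lean document; each statement's English description precedes it below -/
import Mathlib

section
/- Let n ≥ 1 and let H be the complex vector space with basis the set of all configurations m : ℤ/nℤ → ℕ. For i ∈ ℤ/nℤ define ℂ-linear endomorphisms of H on basis vectors by φ_i*(m) = m + δ_i; φ_i(m) = m − δ_i if m_i ≥ 1 and φ_i(m) = 0 otherwise; and N_i(m) = m_i·m, where δ_j is the configuration with a single entry 1 at position j and zeros elsewhere. Then the family of operators B_{b,a,c} = (φ_0*)^{b_0}⋯(φ_{n−1}*)^{b_{n−1}} · φ_0^{a_0}⋯φ_{n−1}^{a_{n−1}} · N_0^{c_0}⋯N_{n−1}^{c_{n−1}}, indexed by triples a, b, c ∈ ℕ^n satisfying a_i·b_i·c_i = 0 for every i, is linearly independent and forms a ℂ-basis of the unital subalgebra of End(H) generated by {φ_i, φ_i*, N_i : i ∈ ℤ/nℤ}. -/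
noncomputable section

open scoped BigOperators

/-- The space of states `H`: the complex vector space with basis the set of all
particle configurations `m : ℤ/nℤ → ℕ`. -/
abbrev StateSpace (n : ℕ) := (ZMod n → ℕ) →₀ ℂ

/-- The creation operator `φ_i*`: on a basis configuration, add one particle at site `i`. -/
def creOp (n : ℕ) (i : ZMod n) : Module.End ℂ (StateSpace n) :=
  Finsupp.lift (StateSpace n) ℂ (ZMod n → ℕ) fun m =>
    Finsupp.single (fun c => m c + (Pi.single i 1 : ZMod n → ℕ) c) 1

/-- The annihilation operator `φ_i`: on a basis configuration, remove one particle at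
site `i` if there is one, and send the configuration to `0` otherwise. -/
def annOp (n : ℕ) (i : ZMod n) : Module.End ℂ (StateSpace n) :=
  Finsupp.lift (StateSpace n) ℂ (ZMod n → ℕ) fun m =>
    if m i = 0 then 0 else Finsupp.single (fun c => m c - (Pi.single i 1 : ZMod n → ℕ) c) 1

/-- The number operator `N_i`: multiply a basis configuration by its occupation number
at site `i`. -/
def numOp (n : ℕ) (i : ZMod n) : Module.End ℂ (StateSpace n) :=
  Finsupp.lift (StateSpace n) ℂ (ZMod n → ℕ) fun m =>
    Finsupp.single m ((m i : ℂ))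

/-- Ordered product `F(0) * F(1) * ⋯ * F(n-1)` of endomorphisms indexed by `ℤ/nℤ`,
taken in increasing order of the index. -/
def ordProd (n : ℕ) (F : ZMod n → Module.End ℂ (StateSpace n)) : Module.End ℂ (StateSpace n) :=
  ((List.finRange n).map fun i => F ((i : ℕ) : ZMod n)).prod

/-- The operator `B_{b,a,c} = (φ*)^b ⬝ φ^a ⬝ N^c` attached to a triple of exponent vectors
`(b, a, c)`, each product taken over the sites in increasing order. -/
def Bfam (n : ℕ) (t : (ZMod n → ℕ) × (ZMod n → ℕ) × (ZMod n → ℕ)) :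
    Module.End ℂ (StateSpace n) :=
  ordProd n (fun i => creOp n i ^ t.1 i) * ordProd n (fun i => annOp n i ^ t.2.1 i) *
    ordProd n (fun i => numOp n i ^ t.2.2 i)

lemma cre_single (n : ℕ) (i : ZMod n) (m : ZMod n → ℕ) (r : ℂ) :
    creOp n i (Finsupp.single m r) = Finsupp.single (Function.update m i (m i + 1)) r := by
  have : (fun c => m c + (Pi.single i 1 : ZMod n → ℕ) c) = Function.update m i (m i + 1) := by
    funext c
    by_cases h : c = i
    · subst h; simp
    · simp [h]
  simp [creOp, this]

lemma ann_single (n : ℕ) (i : ZMod n) (m : ZMod n → ℕ) (r : ℂ) :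
    annOp n i (Finsupp.single m r) =
      if m i = 0 then 0 else Finsupp.single (Function.update m i (m i - 1)) r := by
  have : (fun c => m c - (Pi.single i 1 : ZMod n → ℕ) c) = Function.update m i (m i - 1) := by
    funext c
    by_cases h : c = i
    · subst h; simp
    · simp [h]
  unfold annOp
  rw [this.symm]
  split_ifs with h <;> simp [h]

lemma num_single (n : ℕ) (i : ZMod n) (m : ZMod n → ℕ) (r : ℂ) :
    numOp n i (Finsupp.single m r) = Finsupp.single m ((m i : ℂ) * r) := by
  simp [numOp, mul_comm]

lemma cre_pow_single (n : ℕ) (i : ZMod n) (b : ℕ) (m : ZMod n → ℕ) (r : ℂ) :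
    (creOp n i ^ b) (Finsupp.single m r) = Finsupp.single (Function.update m i (m i + b)) r := by
  induction b with
  | zero => simp
  | succ b ih => rw [pow_succ', Module.End.mul_apply, ih, cre_single]; simp [add_assoc]

lemma ann_pow_single (n : ℕ) (i : ZMod n) (a : ℕ) (m : ZMod n → ℕ) (r : ℂ) :
    (annOp n i ^ a) (Finsupp.single m r) =
      Finsupp.single (Function.update m i (m i - a)) (if a ≤ m i then r else 0) := by
  induction a with
  | zero => simp
  | succ a ih =>
    rw [pow_succ', Module.End.mul_apply, ih, ann_single]
    simp only [Function.update_self, Function.update_idem]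
    by_cases h : a + 1 ≤ m i
    · rw [if_neg (by omega), if_pos (by omega), if_pos h, Nat.sub_sub]
    · rw [if_pos (by omega), if_neg h, Finsupp.single_zero]

lemma num_pow_single (n : ℕ) (i : ZMod n) (c : ℕ) (m : ZMod n → ℕ) (r : ℂ) :
    (numOp n i ^ c) (Finsupp.single m r) = Finsupp.single m ((m i : ℂ) ^ c * r) := by
  induction c with
  | zero => simp
  | succ c ih => rw [pow_succ', Module.End.mul_apply, ih, num_single, pow_succ', mul_assoc]

lemma cre_list (n : ℕ) (b : ZMod n → ℕ) (L : List (ZMod n)) (hL : L.Nodup) (m : ZMod n → ℕ)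
    (r : ℂ) :
    (L.map fun i => creOp n i ^ b i).prod (Finsupp.single m r) =
      Finsupp.single (fun j => if j ∈ L then m j + b j else m j) r := by
  induction L with
  | nil => simp
  | cons i L ih =>
    rw [List.nodup_cons] at hL
    rw [List.map_cons, List.prod_cons, Module.End.mul_apply, ih hL.2, cre_pow_single]
    congr 1
    funext j
    by_cases h : j = i
    · subst h; simp [hL.1]
    · simp [h]

lemma ann_list (n : ℕ) (a : ZMod n → ℕ) (L : List (ZMod n)) (hL : L.Nodup) (m : ZMod n → ℕ)
    (r : ℂ) :
    (L.map fun i => annOp n i ^ a i).prod (Finsupp.single m r) =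
      Finsupp.single (fun j => if j ∈ L then m j - a j else m j)
        ((L.map fun i => if a i ≤ m i then (1 : ℂ) else 0).prod * r) := by
  induction L with
  | nil => simp
  | cons i L ih =>
    rw [List.nodup_cons] at hL
    rw [List.map_cons, List.prod_cons, Module.End.mul_apply, ih hL.2, ann_pow_single]
    congr 1
    · funext j
      by_cases h : j = i
      · subst h; simp [hL.1]
      · simp [h]
    · simp [hL.1]

lemma num_list (n : ℕ) (c : ZMod n → ℕ) (L : List (ZMod n)) (m : ZMod n → ℕ) (r : ℂ) :
    (L.map fun i => numOp n i ^ c i).prod (Finsupp.single m r) =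
      Finsupp.single m ((L.map fun i => (m i : ℂ) ^ c i).prod * r) := by
  induction L with
  | nil => simp
  | cons i L ih =>
    rw [List.map_cons, List.prod_cons, Module.End.mul_apply, ih, num_pow_single]
    simp [mul_assoc]

/-- one-site coefficient -/
def hh (a c m : ℕ) : ℂ := if a ≤ m then (m : ℂ) ^ c else 0

lemma exists_list (n : ℕ) [NeZero n] : ∃ L : List (ZMod n), L.Nodup ∧ (∀ j, j ∈ L) ∧
    ∀ F : ZMod n → Module.End ℂ (StateSpace n), ordProd n F = (L.map F).prod := by
  refine ⟨(List.finRange n).map fun i : Fin n => ((i : ℕ) : ZMod n), ?_, ?_, ?_⟩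
  · refine (List.nodup_finRange n).map ?_
    intro i j h
    have := congrArg ZMod.val h
    simp only [ZMod.val_natCast_of_lt i.2, ZMod.val_natCast_of_lt j.2] at this
    exact Fin.ext this
  · intro j
    exact List.mem_map.2 ⟨⟨j.val, ZMod.val_lt j⟩, List.mem_finRange _, by simp⟩
  · intro F
    unfold ordProd
    rw [List.map_map]
    congr 1
    simp only [List.bind_eq_flatMap, List.pure_def, List.map_flatMap,
      List.map_cons, List.map_nil]
    rw [List.map_eq_flatMap]
    rfl

lemma Bfam_single (n : ℕ) [NeZero n] (t : (ZMod n → ℕ) × (ZMod n → ℕ) × (ZMod n → ℕ))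
    (m : ZMod n → ℕ) :
    Bfam n t (Finsupp.single m 1) =
      Finsupp.single (fun j => m j - t.2.1 j + t.1 j) (∏ i, hh (t.2.1 i) (t.2.2 i) (m i)) := by
  obtain ⟨L, hnd, hmem, key⟩ := exists_list n
  have hp : ∀ f : ZMod n → ℂ, (L.map f).prod = ∏ i, f i := by
    intro f
    rw [← List.prod_toFinset f hnd]
    exact Finset.prod_congr (by ext j; simp [hmem]) fun _ _ => rfl
  unfold Bfam
  rw [Module.End.mul_apply, Module.End.mul_apply, key, key, key, num_list, ann_list _ _ _ hnd,
    cre_list _ _ _ hnd]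
  simp only [hmem, if_true, hp]
  congr 1
  rw [mul_one, ← Finset.prod_mul_distrib]
  refine Finset.prod_congr rfl fun i _ => ?_
  unfold hh
  split_ifs <;> simp

/-! ### Spanning -/

/-- update a triple at a site -/
def upd {n : ℕ} (t : (ZMod n → ℕ) × (ZMod n → ℕ) × (ZMod n → ℕ)) (i : ZMod n) (b a c : ℕ) :
    (ZMod n → ℕ) × (ZMod n → ℕ) × (ZMod n → ℕ) :=
  (Function.update t.1 i b, Function.update t.2.1 i a, Function.update t.2.2 i c)

lemma upd_self {n : ℕ} (t : (ZMod n → ℕ) × (ZMod n → ℕ) × (ZMod n → ℕ)) (i : ZMod n) :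
    upd t i (t.1 i) (t.2.1 i) (t.2.2 i) = t := by
  simp [upd]

lemma Bfam_upd (n : ℕ) [NeZero n] (t : (ZMod n → ℕ) × (ZMod n → ℕ) × (ZMod n → ℕ)) (i : ZMod n)
    (m : ZMod n → ℕ) : ∃ (P : ZMod n → ℕ) (R : ℂ), ∀ b a c,
    Bfam n (upd t i b a c) (Finsupp.single m 1) =
      Finsupp.single (Function.update P i (m i - a + b)) (hh a c (m i) * R) := by
  refine ⟨fun j => m j - t.2.1 j + t.1 j,
    ∏ j ∈ Finset.univ.erase i, hh (t.2.1 j) (t.2.2 j) (m j), fun b a c => ?_⟩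
  rw [Bfam_single]
  congr 1
  · funext j
    by_cases h : j = i
    · subst h; simp [upd]
    · simp [upd, h]
  · rw [← Finset.mul_prod_erase _ _ (Finset.mem_univ i)]
    congr 1
    · simp [upd]
    · refine Finset.prod_congr rfl fun j hj => ?_
      have := Finset.ne_of_mem_erase hj
      simp [upd, this]

lemma end_ext {n : ℕ} {A B : Module.End ℂ (StateSpace n)}
    (h : ∀ m, A (Finsupp.single m 1) = B (Finsupp.single m 1)) : A = B := by
  ext1 m
  ext1
  exact h m

lemma cre_mul (n : ℕ) [NeZero n] (t : (ZMod n → ℕ) × (ZMod n → ℕ) × (ZMod n → ℕ)) (i : ZMod n)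
    (b a c : ℕ) : creOp n i * Bfam n (upd t i b a c) = Bfam n (upd t i (b + 1) a c) := by
  apply end_ext
  intro m
  obtain ⟨P, R, h⟩ := Bfam_upd n t i m
  rw [Module.End.mul_apply, h, h, cre_single]
  simp [add_assoc]

lemma num_mul (n : ℕ) [NeZero n] (t : (ZMod n → ℕ) × (ZMod n → ℕ) × (ZMod n → ℕ)) (i : ZMod n)
    (b a c : ℕ) : numOp n i * Bfam n (upd t i b a c) =
      Bfam n (upd t i b a (c + 1)) + ((b : ℂ) - a) • Bfam n (upd t i b a c) := by
  apply end_ext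
  intro m
  obtain ⟨P, R, h⟩ := Bfam_upd n t i m
  rw [Module.End.mul_apply, LinearMap.add_apply, LinearMap.smul_apply, h, h, num_single,
    Finsupp.smul_single, ← Finsupp.single_add]
  congr 1
  simp only [Function.update_self, hh, smul_eq_mul]
  split_ifs with h1
  · push_cast [Nat.cast_sub h1]
    ring
  · simp

lemma ann_mul_succ (n : ℕ) [NeZero n] (t : (ZMod n → ℕ) × (ZMod n → ℕ) × (ZMod n → ℕ))
    (i : ZMod n) (b a c : ℕ) :
    annOp n i * Bfam n (upd t i (b + 1) a c) = Bfam n (upd t i b a c) := by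
  apply end_ext
  intro m
  obtain ⟨P, R, h⟩ := Bfam_upd n t i m
  rw [Module.End.mul_apply, h, h, ann_single]
  simp [← add_assoc]

lemma ann_mul_zero (n : ℕ) [NeZero n] (t : (ZMod n → ℕ) × (ZMod n → ℕ) × (ZMod n → ℕ))
    (i : ZMod n) (a c : ℕ) :
    annOp n i * Bfam n (upd t i 0 a c) = Bfam n (upd t i 0 (a + 1) c) := by
  apply end_ext
  intro m
  obtain ⟨P, R, h⟩ := Bfam_upd n t i m
  rw [Module.End.mul_apply, h, h, ann_single]
  simp only [Function.update_self, Function.update_idem, hh, add_zero]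
  by_cases h1 : a + 1 ≤ m i
  · rw [if_neg (by omega), if_pos (by omega), if_pos h1, Nat.sub_sub]
  · rw [if_pos (by omega), if_neg h1]; simp

lemma reduce (n : ℕ) [NeZero n] (t : (ZMod n → ℕ) × (ZMod n → ℕ) × (ZMod n → ℕ)) (i : ZMod n)
    (b a c : ℕ) : Bfam n (upd t i (b + 1) (a + 1) (c + 1)) =
      Bfam n (upd t i b a (c + 1)) + (-(a : ℂ)) • Bfam n (upd t i b a c)
        + (a : ℂ) • Bfam n (upd t i (b + 1) (a + 1) c) := by
  apply end_ext
  intro m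
  obtain ⟨P, R, h⟩ := Bfam_upd n t i m
  rw [LinearMap.add_apply, LinearMap.add_apply, LinearMap.smul_apply, LinearMap.smul_apply,
    h, h, h, h]
  simp only [Finsupp.smul_single, ← Finsupp.single_add, hh, smul_eq_mul]
  by_cases h1 : a + 1 ≤ m i
  · have e : m i - (a + 1) + (b + 1) = m i - a + b := by omega
    rw [if_pos h1, if_pos h1, if_pos (by omega), if_pos (by omega), e, ← Finsupp.single_add]
    congr 1
    ring
  · rw [if_neg h1, if_neg h1]
    by_cases h2 : a ≤ m i
    · have : m i = a := by omega
      have e : (a : ℂ) ^ (c + 1) * R + -(a * (a ^ c * R)) = 0 := by ring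
      simp [this, e]
    · simp [h2]

/-- restricted span -/
def rspan (n : ℕ) : Submodule ℂ (Module.End ℂ (StateSpace n)) :=
  Submodule.span ℂ
        (Set.range (fun t : {t : (ZMod n → ℕ) × (ZMod n → ℕ) × (ZMod n → ℕ) //
          ∀ i, t.2.1 i * t.1 i * t.2.2 i = 0} => Bfam n t.1))

lemma sum_upd {n : ℕ} [NeZero n] (f : ZMod n → ℕ) (i : ZMod n) (x : ℕ) :
    ∑ j, Function.update f i x j = x + ∑ j ∈ Finset.univ.erase i, f j := by
  rw [← Finset.add_sum_erase _ _ (Finset.mem_univ i)]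
  congr 1
  · simp
  · exact Finset.sum_congr rfl fun j hj => by simp [Finset.ne_of_mem_erase hj]

lemma mem_rspan (n : ℕ) [NeZero n] (N : ℕ) : ∀ t : (ZMod n → ℕ) × (ZMod n → ℕ) × (ZMod n → ℕ),
    (∑ j, t.2.1 j + ∑ j, t.2.2 j = N) → Bfam n t ∈ rspan n := by
  induction N using Nat.strong_induction_on with
  | _ N ih =>
    intro t ht
    by_cases h : ∀ i, t.2.1 i * t.1 i * t.2.2 i = 0
    · exact Submodule.subset_span ⟨⟨t, h⟩, rfl⟩
    · push Not at h
      obtain ⟨i, hi⟩ := h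
      obtain ⟨b, hb⟩ := Nat.exists_eq_succ_of_ne_zero (n := t.1 i) (by rintro h; simp [h] at hi)
      obtain ⟨a, ha⟩ := Nat.exists_eq_succ_of_ne_zero (n := t.2.1 i) (by rintro h; simp [h] at hi)
      obtain ⟨c, hc⟩ := Nat.exists_eq_succ_of_ne_zero (n := t.2.2 i) (by rintro h; simp [h] at hi)
      have e := upd_self t i
      rw [hb, ha, hc] at e
      rw [← e] at ht ⊢
      have red := reduce n t i b a c
      simp only [Nat.succ_eq_add_one] at *
      rw [red]
      simp only [upd, sum_upd] at ht
      refine Submodule.add_mem _ ?_ (Submodule.smul_mem _ _ ?_)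
      on_goal 1 => apply Submodule.add_mem
      on_goal 2 => apply Submodule.smul_mem
      all_goals
        refine ih _ ?_ _ rfl
        simp only [upd, sum_upd]
        omega

lemma gen_mul_mem (n : ℕ) [NeZero n] (i : ZMod n) (s : Module.End ℂ (StateSpace n))
    (hs : s ∈ rspan n) :
    creOp n i * s ∈ rspan n ∧ annOp n i * s ∈ rspan n ∧ numOp n i * s ∈ rspan n := by
  have hm : ∀ t, Bfam n t ∈ rspan n := fun t => mem_rspan n _ t rfl
  induction hs using Submodule.span_induction with
  | mem x hx =>
    obtain ⟨⟨t, -⟩, rfl⟩ := hx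
    simp only
    rw [← upd_self t i, cre_mul, num_mul]
    refine ⟨hm _, ?_, add_mem (hm _) (Submodule.smul_mem _ _ (hm _))⟩
    rcases t.1 i with _ | b
    · rw [ann_mul_zero]; exact hm _
    · rw [ann_mul_succ]; exact hm _
  | zero => simp
  | add x y _ _ hx hy =>
    simp only [mul_add]
    exact ⟨add_mem hx.1 hy.1, add_mem hx.2.1 hy.2.1, add_mem hx.2.2 hy.2.2⟩
  | smul r x _ hx =>
    simp only [mul_smul_comm]
    exact ⟨Submodule.smul_mem _ _ hx.1, Submodule.smul_mem _ _ hx.2.1,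
      Submodule.smul_mem _ _ hx.2.2⟩

lemma one_mem_rspan (n : ℕ) [NeZero n] : (1 : Module.End ℂ (StateSpace n)) ∈ rspan n := by
  have : Bfam n (0, 0, 0) = 1 := by
    apply end_ext
    intro m
    rw [Bfam_single]
    simp [hh]
  rw [← this]
  exact mem_rspan n _ _ rfl

lemma ordProd_mem (n : ℕ) (S : Subalgebra ℂ (Module.End ℂ (StateSpace n)))
    (F : ZMod n → Module.End ℂ (StateSpace n)) (h : ∀ i, F i ∈ S) : ordProd n F ∈ S := by
  apply Subalgebra.list_prod_mem
  intro x hx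
  obtain ⟨i, -, rfl⟩ := List.mem_map.1 hx
  exact h _

lemma span_part (n : ℕ) [NeZero n] : rspan n =
      Subalgebra.toSubmodule (Algebra.adjoin ℂ
        {x : Module.End ℂ (StateSpace n) |
          ∃ i : ZMod n, x = creOp n i ∨ x = annOp n i ∨ x = numOp n i}) := by
  apply le_antisymm
  · refine Submodule.span_le.2 ?_
    rintro _ ⟨⟨t, -⟩, rfl⟩
    simp only [SetLike.mem_coe, Subalgebra.mem_toSubmodule]
    refine mul_mem (mul_mem ?_ ?_) ?_ <;>
    · refine ordProd_mem _ _ _ fun i => pow_mem (Algebra.subset_adjoin ?_) _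
      exact ⟨i, by simp⟩
  · intro x hx
    rw [Subalgebra.mem_toSubmodule] at hx
    have : ∀ s ∈ rspan n, x * s ∈ rspan n := by
      induction hx using Algebra.adjoin_induction with
      | mem x hx =>
        intro s hs
        obtain ⟨i, rfl | rfl | rfl⟩ := hx
        · exact (gen_mul_mem n i s hs).1
        · exact (gen_mul_mem n i s hs).2.1
        · exact (gen_mul_mem n i s hs).2.2
      | algebraMap r =>
        intro s hs
        rw [← Algebra.smul_def]
        exact Submodule.smul_mem _ _ hs
      | add x y _ _ hx hy =>
        intro s hs
        rw [add_mul]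
        exact add_mem (hx s hs) (hy s hs)
      | mul x y _ _ hx hy =>
        intro s hs
        rw [mul_assoc]
        exact hx _ (hy s hs)
    simpa using this 1 (one_mem_rspan n)

/-! ### Linear independence -/

/-- one-site index type -/
abbrev T1 := {t : ℕ × ℕ × ℕ // t.2.1 * t.1 * t.2.2 = 0}

/-- one-site matrix entries -/
def gg (t : T1) (x : ℕ × ℕ) : ℂ :=
  if x.2 = x.1 - t.1.2.1 + t.1.1 then hh t.1.2.1 t.1.2.2 x.1 else 0

lemma gg_li : LinearIndependent ℂ gg := by
  rw [linearIndependent_iff']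
  intro s l hl
  have ev : ∀ m m' : ℕ, ∑ t ∈ s, l t * gg t (m, m') = 0 := by
    intro m m'
    have := congrFun hl (m, m')
    simpa [Finset.sum_apply] using this
  -- sector relation
  have sec : ∀ (k : ℤ) (m : ℕ), 0 ≤ (m : ℤ) + k →
      ∑ t ∈ s with (t.1.1 : ℤ) - t.1.2.1 = k, l t * hh t.1.2.1 t.1.2.2 m = 0 := by
    intro k m hm
    rw [← ev m (m + k).toNat, Finset.sum_filter]
    refine Finset.sum_congr rfl fun t _ => ?_
    simp only [gg, hh]
    by_cases h : t.1.2.1 ≤ m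
    · have : ((m + k).toNat = m - t.1.2.1 + t.1.1) ↔ (t.1.1 : ℤ) - t.1.2.1 = k := by omega
      simp only [this, h, if_true]
      split_ifs <;> simp
    · simp [h]
  -- positive power coefficients vanish
  have hpos : ∀ t ∈ s, t.1.2.2 ≠ 0 → l t = 0 := by
    intro t ht hc
    set k : ℤ := (t.1.1 : ℤ) - t.1.2.1 with hk
    set p : Polynomial ℂ := ∑ u ∈ s with (u.1.1 : ℤ) - u.1.2.1 = k,
      Polynomial.C (l u) * Polynomial.X ^ u.1.2.2 with hp
    have hp0 : p = 0 := by
      apply Polynomial.eq_zero_of_infinite_isRoot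
      have hinf : (Set.Ici (k.natAbs + ∑ u ∈ s, u.1.2.1)).Infinite := Set.Ici_infinite _
      refine (hinf.image (f := fun m : ℕ => (m : ℂ)) Nat.cast_injective.injOn).mono ?_
      rintro _ ⟨m, hm, rfl⟩
      simp only [Set.mem_Ici] at hm
      simp only [Set.mem_ofPred_eq, Polynomial.IsRoot.def, hp, Polynomial.eval_finsetSum]
      rw [← sec k m (by omega)]
      refine Finset.sum_congr rfl fun u hu => ?_
      have hu' : u.1.2.1 ≤ ∑ u ∈ s, u.1.2.1 :=
        Finset.single_le_sum (f := fun u : T1 => u.1.2.1) (fun _ _ => Nat.zero_le _)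
          (Finset.mem_filter.1 hu).1
      simp [hh, show u.1.2.1 ≤ m by omega]
    have hco := congrArg (fun q => Polynomial.coeff q t.1.2.2) hp0
    simp only [hp, Polynomial.finsetSum_coeff, Polynomial.coeff_C_mul, Polynomial.coeff_X_pow,
      Polynomial.coeff_zero] at hco
    rw [Finset.sum_eq_single t] at hco
    · simpa using hco
    · intro u hu hut
      rw [if_neg, mul_zero]
      intro hcc
      apply hut
      have hu2 := (Finset.mem_filter.1 hu).2
      have h1 := u.2
      have h2 := t.2
      have h3 : u.1.2.1 = 0 ∨ u.1.1 = 0 := by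
        rcases Nat.mul_eq_zero.1 h1 with h | h
        · exact Nat.mul_eq_zero.1 h
        · omega
      have h4 : t.1.2.1 = 0 ∨ t.1.1 = 0 := by
        rcases Nat.mul_eq_zero.1 h2 with h | h
        · exact Nat.mul_eq_zero.1 h
        · omega
      apply Subtype.ext
      refine Prod.ext ?_ (Prod.ext ?_ hcc.symm) <;> omega
    · intro h
      exact (h (Finset.mem_filter.2 ⟨ht, rfl⟩)).elim
  have main : ∀ (N : ℕ), ∀ t ∈ s, t.1.2.1 = N → l t = 0 := by
    intro N
    induction N using Nat.strong_induction_on with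
    | _ N ih =>
      intro t ht hN
      by_cases hc : t.1.2.2 = 0
      swap
      · exact hpos t ht hc
      have := sec ((t.1.1 : ℤ) - t.1.2.1) t.1.2.1 (by omega)
      rw [Finset.sum_eq_single t] at this
      · simpa [hh, hc] using this
      · intro u hu hut
        obtain ⟨hus, hu2⟩ := Finset.mem_filter.1 hu
        by_cases huc : u.1.2.2 = 0
        swap
        · rw [hpos u hus huc, zero_mul]
        rcases lt_trichotomy u.1.2.1 t.1.2.1 with h | h | h
        · rw [ih _ (hN ▸ h) u hus rfl, zero_mul]
        · exfalso
          apply hut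
          apply Subtype.ext
          refine Prod.ext ?_ (Prod.ext h ?_) <;> omega
        · simp [hh, not_le.2 h]
      · intro h
        exact (h (Finset.mem_filter.2 ⟨ht, rfl⟩)).elim
  intro t ht
  exact main _ t ht rfl

lemma li_prod {A B X Y : Type*} {f : A → X → ℂ} {g : B → Y → ℂ}
    (hf : LinearIndependent ℂ f) (hg : LinearIndependent ℂ g) :
    LinearIndependent ℂ (fun (p : A × B) (z : X × Y) => f p.1 z.1 * g p.2 z.2) := by
  classical
  rw [linearIndependent_iff'] at hf hg
  rw [linearIndependent_iff'']
  intro s l hs hl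
  rintro ⟨a, b⟩
  have ev : ∀ x y, ∑ p ∈ s, l p * (f p.1 x * g p.2 y) = 0 := by
    intro x y
    have := congrFun hl (x, y)
    simpa [Finset.sum_apply] using this
  have ev2 : ∀ x y, ∑ p ∈ s.image Prod.fst ×ˢ s.image Prod.snd,
      l p * (f p.1 x * g p.2 y) = 0 := by
    intro x y
    rw [← ev x y]
    symm
    apply Finset.sum_subset
    · intro p hp
      exact Finset.mem_product.2 ⟨Finset.mem_image_of_mem _ hp, Finset.mem_image_of_mem _ hp⟩
    · intro p _ hp
      rw [hs p hp, zero_mul]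
  by_cases hab : (a, b) ∈ s
  swap
  · exact hs _ hab
  have step : ∀ y, ∀ a ∈ s.image Prod.fst, ∑ b ∈ s.image Prod.snd, l (a, b) * g b y = 0 := by
    intro y
    apply hf
    funext x
    rw [Finset.sum_apply]
    simp only [Pi.smul_apply, smul_eq_mul, Pi.zero_apply]
    rw [← ev2 x y, Finset.sum_product]
    refine Finset.sum_congr rfl fun a _ => ?_
    rw [Finset.sum_mul]
    exact Finset.sum_congr rfl fun b _ => by ring
  refine hg (s.image Prod.snd) (fun b => l (a, b)) ?_ b (Finset.mem_image_of_mem Prod.snd hab)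
  funext y
  rw [Finset.sum_apply]
  simpa using step y a (Finset.mem_image_of_mem Prod.fst hab)

lemma li_pi {A X : Type*} {f : A → X → ℂ} (hf : LinearIndependent ℂ f) (k : ℕ) :
    LinearIndependent ℂ (fun (t : Fin k → A) (x : Fin k → X) => ∏ i, f (t i) (x i)) := by
  induction k with
  | zero =>
    rw [linearIndependent_unique_iff]
    intro h
    simpa using congrFun h default
  | succ k ih =>
    have h := (li_prod hf ih).comp (fun t : Fin (k + 1) → A => (t 0, fun i : Fin k => t i.succ)) (by
      intro t u h
      simp only [Prod.mk.injEq] at h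
      funext i
      refine Fin.cases h.1 (fun j => congrFun h.2 j) i)
    refine LinearIndependent.of_comp
      (LinearMap.funLeft ℂ ℂ (fun z : X × (Fin k → X) => (Fin.cons z.1 z.2 : Fin (k + 1) → X))) ?_
    convert h using 1
    funext t z
    simp [LinearMap.funLeft_apply, Fin.prod_univ_succ]

lemma li_part (n : ℕ) [NeZero n] : LinearIndependent ℂ
      (fun t : {t : (ZMod n → ℕ) × (ZMod n → ℕ) × (ZMod n → ℕ) //
          ∀ i, t.2.1 i * t.1 i * t.2.2 i = 0} => Bfam n t.1) := by
  have hpi : LinearIndependent ℂ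
      (fun (t : ZMod n → T1) (x : ZMod n → ℕ × ℕ) => ∏ i, gg (t i) (x i)) := by
    obtain ⟨k, rfl⟩ := Nat.exists_eq_succ_of_ne_zero (NeZero.ne n)
    exact li_pi gg_li (k + 1)
  have h := hpi.comp (fun t : {t : (ZMod n → ℕ) × (ZMod n → ℕ) × (ZMod n → ℕ) //
          ∀ i, t.2.1 i * t.1 i * t.2.2 i = 0} =>
        fun i => (⟨(t.1.1 i, t.1.2.1 i, t.1.2.2 i), t.2 i⟩ : T1)) (by
      rintro ⟨⟨b, a, c⟩, ht⟩ ⟨⟨b', a', c'⟩, hu⟩ h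
      have := fun i => congrFun h i
      simp only [Subtype.mk.injEq, Prod.mk.injEq] at this ⊢
      exact ⟨funext fun i => (this i).1, funext fun i => (this i).2.1,
        funext fun i => (this i).2.2⟩)
  let Φ : Module.End ℂ (StateSpace n) →ₗ[ℂ] ((ZMod n → ℕ × ℕ) → ℂ) :=
    { toFun := fun A x => A (Finsupp.single (fun i => (x i).1) 1) (fun i => (x i).2)
      map_add' := fun A B => by funext x; simp
      map_smul' := fun r A => by funext x; simp }
  refine LinearIndependent.of_comp Φ ?_
  convert h using 1
  funext t x
  change Bfam n t.1 (Finsupp.single (fun i => (x i).1) 1) (fun i => (x i).2) = _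
  rw [Bfam_single, Finsupp.single_apply]
  simp only [Function.comp, gg]
  split_ifs with h1
  · refine Finset.prod_congr rfl fun i _ => ?_
    rw [if_pos (congrFun h1 i).symm]
  · obtain ⟨i, hi⟩ := Function.ne_iff.1 h1
    symm
    apply Finset.prod_eq_zero (Finset.mem_univ i)
    rw [if_neg (fun h => hi h.symm)]

/-- The family `B_{b,a,c}`, indexed by triples `(b,a,c)` of exponent
vectors with `a_i · b_i · c_i = 0` for every `i`, is linearly independent and spans the
unital subalgebra of `End(H)` generated by the `φ_i, φ_i*, N_i`, i.e. it is a ℂ-basis of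
the phase algebra. -/
theorem phase_algebra_basis (n : ℕ) (hn : 1 ≤ n) :
    LinearIndependent ℂ
      (fun t : {t : (ZMod n → ℕ) × (ZMod n → ℕ) × (ZMod n → ℕ) //
          ∀ i, t.2.1 i * t.1 i * t.2.2 i = 0} => Bfam n t.1) ∧
    Submodule.span ℂ
        (Set.range (fun t : {t : (ZMod n → ℕ) × (ZMod n → ℕ) × (ZMod n → ℕ) //
          ∀ i, t.2.1 i * t.1 i * t.2.2 i = 0} => Bfam n t.1)) =
      Subalgebra.toSubmodule (Algebra.adjoin ℂ
        {x : Module.End ℂ (StateSpace n) |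
          ∃ i : ZMod n, x = creOp n i ∨ x = annOp n i ∨ x = numOp n i}) := by
  have : NeZero n := ⟨by omega⟩
  exact ⟨li_part n, span_part n⟩
end
end

section
/- Let n ≥ 2 and let Pl_fin be the quotient of the free associative ℂ-algebra on generators a_1, …, a_{n−1} by the two-sided ideal generated by a_ia_j − a_ja_i for all i, j with |i−j| > 1, together with a_{i+1}a_i² − a_ia_{i+1}a_i and a_{i+1}²a_i − a_{i+1}a_ia_{i+1} for 1 ≤ i ≤ n−2. For 1 ≤ j ≤ m ≤ n−1 write w_{m,j} = a_m a_{m−1} ⋯ a_j (the descending string of generators from a_m down to a_j). Then the images in Pl_fin of the monomials ∏_{m=1}^{n−1} ∏_{j=1}^{m} w_{m,j}^{α_{m,j}}, the factors multiplied in the fixed order of increasing m and, for each m, increasing j, taken over all choices of exponents α_{m,j} ∈ ℕ, form a ℂ-basis of Pl_fin. -/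
noncomputable section

open scoped BigOperators

/-- The generator `a_{i+1}` of the free algebra (0-based indexing of the `n-1` generators
`a_1, …, a_{n-1}`). -/
def g1 (n : ℕ) (i : Fin (n - 1)) : FreeAlgebra ℂ (Fin (n - 1)) := FreeAlgebra.ι ℂ i

/-- The defining relations of the local plactic algebra `Pl_fin`:
`a_i a_j = a_j a_i` for `|i - j| > 1`, and the Knuth-type relations
`a_{i+1} a_i a_i = a_i a_{i+1} a_i` and `a_{i+1} a_{i+1} a_i = a_{i+1} a_i a_{i+1}`. -/
inductive PlFinRel (n : ℕ) :
    FreeAlgebra ℂ (Fin (n - 1)) → FreeAlgebra ℂ (Fin (n - 1)) → Prop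
  | comm (i j : Fin (n - 1)) (h : (i : ℕ) + 1 < (j : ℕ) ∨ (j : ℕ) + 1 < (i : ℕ)) :
      PlFinRel n (g1 n i * g1 n j) (g1 n j * g1 n i)
  | row (i j : Fin (n - 1)) (h : (j : ℕ) = (i : ℕ) + 1) :
      PlFinRel n (g1 n j * (g1 n i * g1 n i)) (g1 n i * (g1 n j * g1 n i))
  | col (i j : Fin (n - 1)) (h : (j : ℕ) = (i : ℕ) + 1) :
      PlFinRel n (g1 n j * (g1 n j * g1 n i)) (g1 n j * (g1 n i * g1 n j))

/-- The local plactic algebra `Pl_fin` on the generators `a_1, …, a_{n-1}`. -/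
abbrev PlFin (n : ℕ) := RingQuot (PlFinRel n)

/-- The generator `a_{i+1}` as an element of `Pl_fin`. -/
def aF (n : ℕ) (i : Fin (n - 1)) : PlFin n :=
  RingQuot.mkAlgHom ℂ (PlFinRel n) (g1 n i)

/-- The descending string `w_{m,j} = a_m a_{m-1} ⋯ a_j` (here in 0-based indexing:
`w(m,j) = a_{m+1} a_m ⋯ a_{j+1}` for `0 ≤ j ≤ m ≤ n-2`). -/
def wmon (n : ℕ) (m : Fin (n - 1)) (j : Fin ((m : ℕ) + 1)) : PlFin n :=
  ((List.range ((m : ℕ) + 1 - (j : ℕ))).map fun t =>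
    aF n ⟨(m : ℕ) - t, by have := m.isLt; omega⟩).prod

/-- The index set for the exponents: pairs `(m, j)` with `1 ≤ j ≤ m ≤ n-1`
(0-based: `0 ≤ j ≤ m ≤ n-2`). -/
abbrev MonIdx (n : ℕ) := Σ m : Fin (n - 1), Fin ((m : ℕ) + 1)

/-- The monomial `∏_{m} ∏_{j ≤ m} w_{m,j}^{α_{m,j}}`, the factors multiplied in increasing
order of `m` and, for fixed `m`, increasing order of `j`. -/
def famMon (n : ℕ) (α : MonIdx n → ℕ) : PlFin n :=
  ((List.finRange (n - 1)).map fun (m : Fin (n - 1)) =>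
    ((List.finRange ((m : ℕ) + 1)).map fun (j : Fin ((m : ℕ) + 1)) => wmon n m j ^ α ⟨m, j⟩).prod).prod


theorem lpMnEx (i : ℕ) (F : ℕ → ℕ → ℕ) : ∃ k, i ≤ k ∨ 0 < F (i-1) k := ⟨i, Or.inl le_rfl⟩

/-- smallest column available -/
def lpMn (i : ℕ) (F : ℕ → ℕ → ℕ) : ℕ := Nat.find (lpMnEx i F)

theorem lpMn_iff (i k : ℕ) (F : ℕ → ℕ → ℕ) :
    lpMn i F = k ↔ (i ≤ k ∨ 0 < F (i-1) k) ∧ ∀ j < k, j < i ∧ F (i-1) j = 0 := by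
  unfold lpMn
  rw [Nat.find_eq_iff]
  simp

def lpU (i k : ℕ) (F : ℕ → ℕ → ℕ) : ℕ → ℕ → ℕ := fun m j =>
  if m = i ∧ j = k then F m j + 1 else if m + 1 = i ∧ j = k ∧ j < i then F m j - 1 else F m j

def lpT (i : ℕ) (F : ℕ → ℕ → ℕ) : ℕ → ℕ → ℕ := lpU i (lpMn i F) F

theorem lpT_eq {i k : ℕ} {F : ℕ → ℕ → ℕ} (h : lpMn i F = k) : lpT i F = lpU i k F := by
  subst h; rfl

theorem lpMn_spec (i : ℕ) (F : ℕ → ℕ → ℕ) :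
    (lpMn i F = i ∨ (lpMn i F < i ∧ 0 < F (i-1) (lpMn i F))) ∧ ∀ j < lpMn i F, F (i-1) j = 0 := by
  have h := (lpMn_iff i _ F).1 rfl
  refine ⟨?_, fun j hj => (h.2 j hj).2⟩
  rcases h.1 with h1 | h1
  · left
    by_contra h3
    have := (h.2 i (by omega)).1
    omega
  · by_cases h4 : lpMn i F < i
    · exact Or.inr ⟨h4, h1⟩
    · left
      by_contra h3
      have := (h.2 i (by omega)).1
      omega

theorem lpMn_eq {i k : ℕ} {F : ℕ → ℕ → ℕ} (h1 : k = i ∨ (k < i ∧ 0 < F (i-1) k))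
    (h2 : ∀ j < k, F (i-1) j = 0) : lpMn i F = k := by
  rw [lpMn_iff]
  refine ⟨by omega, fun j hj => ⟨by omega, h2 j hj⟩⟩

theorem lpMn_congr {i : ℕ} {F G : ℕ → ℕ → ℕ} (h : ∀ j < i, F (i-1) j = G (i-1) j) :
    lpMn i F = lpMn i G := by
  have := lpMn_spec i G
  apply lpMn_eq
  · rcases this.1 with h1 | h1
    · exact Or.inl h1
    · right; rw [h _ h1.1]; exact h1
  · intro j hj
    rw [h j (by omega)]; exact this.2 j hj

theorem lpT_comm {i j : ℕ} (h : i + 1 < j) (F : ℕ → ℕ → ℕ) :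
    lpT i (lpT j F) = lpT j (lpT i F) := by
  have e1 : lpMn i (lpT j F) = lpMn i F := by
    apply lpMn_congr; intro c hc; simp only [lpT, lpU]; grind
  have e2 : lpMn j (lpT i F) = lpMn j F := by
    apply lpMn_congr; intro c hc; simp only [lpT, lpU]; grind
  rw [lpT_eq e1, lpT_eq e2]
  funext m c
  simp only [lpT, lpU]
  grind

theorem lpT_row (i : ℕ) (F : ℕ → ℕ → ℕ) :
    lpT (i+1) (lpT i (lpT i F)) = lpT i (lpT (i+1) (lpT i F)) := by
  obtain ⟨k, hk⟩ : ∃ k, lpMn i F = k := ⟨_, rfl⟩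
  have sk := lpMn_spec i F
  rw [hk] at sk
  rw [lpT_eq hk]
  obtain ⟨l, hl⟩ : ∃ l, lpMn i (lpU i k F) = l := ⟨_, rfl⟩
  have sl := lpMn_spec i (lpU i k F)
  rw [hl] at sl
  rw [lpT_eq hl]
  have hkl : k ≤ l := by
    by_contra hlt
    have h1 : 0 < lpU i k F (i-1) l := by omega
    have h2 := sk.2 l (by omega)
    simp only [lpU] at h1
    grind
  obtain ⟨x, hx⟩ : ∃ x, lpMn (i+1) (lpU i k F) = x := ⟨_, rfl⟩
  have sx := lpMn_spec (i+1) (lpU i k F)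
  rw [hx] at sx
  rw [lpT_eq hx]
  simp only [Nat.add_sub_cancel] at sx
  have hxk : x ≤ k := by
    by_contra hlt
    have h2 := sx.2 k (by omega)
    simp [lpU] at h2
  have ex : lpMn (i+1) (lpU i l (lpU i k F)) = x := by
    apply lpMn_eq
    · simp only [Nat.add_sub_cancel]
      simp only [lpU] at sx ⊢
      grind
    · intro j hj
      have := sx.2 j hj
      simp only [Nat.add_sub_cancel]
      simp only [lpU] at this ⊢
      grind
  have el : lpMn i (lpU (i+1) x (lpU i k F)) = l := by
    rw [← hl]
    apply lpMn_congr
    intro j hj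
    simp only [lpU]
    grind
  rw [lpT_eq ex, lpT_eq el]
  have hp : 0 < lpU i k F i x := by
    rcases sx.1 with h | h
    · omega
    · exact h.2
  funext m c
  generalize lpU i k F = G at *
  simp only [lpU]
  grind

theorem lpT_col (i : ℕ) (F : ℕ → ℕ → ℕ) :
    lpT (i+1) (lpT (i+1) (lpT i F)) = lpT (i+1) (lpT i (lpT (i+1) F)) := by
  obtain ⟨k, hk⟩ : ∃ k, lpMn i F = k := ⟨_, rfl⟩
  have sk := lpMn_spec i F
  rw [hk] at sk
  obtain ⟨r, hr⟩ : ∃ k, lpMn (i+1) F = k := ⟨_, rfl⟩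
  have sr := lpMn_spec (i+1) F
  rw [hr] at sr
  simp only [Nat.add_sub_cancel] at sr
  rw [lpT_eq hk, lpT_eq hr]
  have ek : lpMn i (lpU (i+1) r F) = k := by
    rw [← hk]
    apply lpMn_congr
    intro j hj
    simp only [lpU]
    grind
  rw [lpT_eq ek]
  have hc : lpU i k (lpU (i+1) r F) = lpU (i+1) r (lpU i k F) := by
    funext m c
    simp only [lpU]
    grind
  by_cases h : k < r
  · have e1 : lpMn (i+1) (lpU i k F) = k := by
      apply lpMn_eq
      · simp [lpU]; omega
      · intro j hj
        have := sr.2 j (by omega)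
        simp [lpU]; grind
    have e2 : lpMn (i+1) (lpU (i+1) k (lpU i k F)) = r := by
      apply lpMn_eq
      · simp only [lpU, Nat.add_sub_cancel]; grind
      · intro j hj
        have := sr.2 j (by omega)
        simp only [lpU, Nat.add_sub_cancel]; grind
    have e3 : lpMn (i+1) (lpU i k (lpU (i+1) r F)) = k := by
      apply lpMn_eq
      · simp only [lpU, Nat.add_sub_cancel]; grind
      · intro j hj
        have := sr.2 j (by omega)
        simp only [lpU, Nat.add_sub_cancel]; grind
    rw [lpT_eq e1, lpT_eq e2, lpT_eq e3]
    funext m c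
    simp only [lpU]
    grind
  · have e1 : lpMn (i+1) (lpU i k F) = r := by
      apply lpMn_eq
      · simp only [lpU, Nat.add_sub_cancel]; grind
      · intro j hj
        have := sr.2 j (by omega)
        simp only [lpU, Nat.add_sub_cancel]; grind
    rw [lpT_eq e1, hc]

section alg
variable {A : Type*} [Monoid A] (a : ℕ → A)

def lpV (j : ℕ) : ℕ → A
  | 0 => 1
  | l+1 => a (j+l) * lpV j l

theorem lpV_far (hcomm : ∀ i j, i + 1 < j → a i * a j = a j * a i) (j l k : ℕ) (h : j + l < k) :
    Commute (a k) (lpV a j l) := by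
  induction l with
  | zero => exact Commute.one_right _
  | succ l ih =>
    exact Commute.mul_right (hcomm _ _ (by omega)).symm (ih (by omega))

theorem lpV_in (hcomm : ∀ i j, i + 1 < j → a i * a j = a j * a i)
    (hrow : ∀ i, a (i+1) * (a i * a i) = a i * (a (i+1) * a i))
    (hcol : ∀ i, a (i+1) * (a (i+1) * a i) = a (i+1) * (a i * a (i+1)))
    (j l k : ℕ) (h1 : j ≤ k) (h : k < j + l) :
    Commute (a k) (lpV a j l) := by
  induction l with
  | zero => omega
  | succ l ih =>
    rcases lt_trichotomy (k+1) (j+l) with h2 | h2 | h2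
    · exact Commute.mul_right (hcomm _ _ h2) (ih (by omega))
    · have h3 := ih (by omega)
      obtain ⟨l, rfl⟩ : ∃ l', l = l' + 1 := ⟨l - 1, by omega⟩
      have hk : k = j + l := by omega
      subst hk
      unfold Commute SemiconjBy at *
      simp only [lpV] at *
      rw [mul_assoc, ← h3, ← add_assoc]
      simp only [← mul_assoc] at *
      rw [← hrow]
    · have hk : k = j + l := by omega
      subst hk
      rcases l with _ | l
      · simp [lpV]
      · have h4 := lpV_far a hcomm j l (j+(l+1)) (by omega)
        unfold Commute SemiconjBy at *
        simp only [lpV] at *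
        rw [mul_assoc, mul_assoc, ← h4, ← add_assoc]
        have := hcol (j+l)
        simp only [← mul_assoc] at *
        rw [this]

theorem lpV_sub (hcomm : ∀ i j, i + 1 < j → a i * a j = a j * a i)
    (hrow : ∀ i, a (i+1) * (a i * a i) = a i * (a (i+1) * a i))
    (hcol : ∀ i, a (i+1) * (a (i+1) * a i) = a (i+1) * (a i * a (i+1)))
    (j l j' l' : ℕ) (h1 : j ≤ j') (h : j' + l' ≤ j + l) :
    Commute (lpV a j l) (lpV a j' l') := by
  induction l' with
  | zero => exact Commute.one_right _
  | succ l' ih =>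
    exact Commute.mul_right (lpV_in a hcomm hrow hcol _ _ _ (by omega) (by omega)).symm
      (ih (by omega))

/-- ordered product of powers -/
def lpL (x : ℕ → A) (f : ℕ → ℕ) : ℕ → A
  | 0 => 1
  | M+1 => lpL x f M * x M ^ f M

theorem lpL_congr (x : ℕ → A) (f g : ℕ → ℕ) (M : ℕ) (h : ∀ j < M, f j = g j) :
    lpL x f M = lpL x g M := by
  induction M with
  | zero => rfl
  | succ M ih => rw [lpL, lpL, ih (fun j hj => h j (by omega)), h M (by omega)]

theorem lpL_zero (x : ℕ → A) (f : ℕ → ℕ) (M : ℕ) (h : ∀ j < M, f j = 0) :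
    lpL x f M = 1 := by
  induction M with
  | zero => rfl
  | succ M ih => rw [lpL, ih (fun j hj => h j (by omega)), h M (by omega)]; simp

theorem lpL_commute (y : A) (x : ℕ → A) (f : ℕ → ℕ) (M : ℕ)
    (h : ∀ j < M, f j ≠ 0 → Commute y (x j)) : Commute y (lpL x f M) := by
  induction M with
  | zero => exact Commute.one_right _
  | succ M ih =>
    refine Commute.mul_right (ih fun j hj => h j (by omega)) ?_
    by_cases h0 : f M = 0
    · rw [h0, pow_zero]; exact Commute.one_right _
    · exact (h M (by omega) h0).pow_right _

theorem lpL_insert (x : ℕ → A) (f g : ℕ → ℕ) (M k : ℕ) (hk : k < M)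
    (h : ∀ i j, i < M → j < M → Commute (x i) (x j))
    (h1 : g k = f k + 1) (h2 : ∀ j, j ≠ k → g j = f j) : x k * lpL x f M = lpL x g M := by
  induction M with
  | zero => omega
  | succ M ih =>
    rw [lpL, lpL]
    by_cases hkM : k = M
    · subst hkM
      rw [h1, lpL_congr x g f k (fun j hj => h2 j (by omega)), pow_succ', ← mul_assoc, ← mul_assoc,
        (lpL_commute (x k) x f k fun j hj _ => h _ _ (by omega) (by omega)).eq]
    · rw [← mul_assoc, ih (by omega) (fun i j hi hj => h i j (by omega) (by omega)),
        h2 M (by omega)]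

def lpR (m : ℕ) (f : ℕ → ℕ) : A := lpL (fun j => lpV a j (m+1-j)) f (m+1)

def lpP (F : ℕ → ℕ → ℕ) : ℕ → A
  | 0 => 1
  | N+1 => lpP F N * lpR a N (F N)

theorem lpP_congr (F G : ℕ → ℕ → ℕ) (N : ℕ) (h : ∀ m < N, ∀ j ≤ m, F m j = G m j) :
    lpP a F N = lpP a G N := by
  induction N with
  | zero => rfl
  | succ N ih =>
    rw [lpP, lpP, ih (fun j hj => h j (by omega)), lpR, lpR,
      lpL_congr _ _ (G N) _ fun j hj => h N (by omega) j (by omega)]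

theorem lpP_far (hcomm : ∀ i j, i + 1 < j → a i * a j = a j * a i) (F : ℕ → ℕ → ℕ) (N k : ℕ)
    (h : N < k) : Commute (a k) (lpP a F N) := by
  induction N with
  | zero => exact Commute.one_right _
  | succ N ih =>
    refine Commute.mul_right (ih (by omega)) (lpL_commute _ _ _ _ fun j hj _ => ?_)
    exact lpV_far a hcomm _ _ _ (by omega)

theorem lpP_mul (hcomm : ∀ i j, i + 1 < j → a i * a j = a j * a i)
    (hrow : ∀ i, a (i+1) * (a i * a i) = a i * (a (i+1) * a i))
    (hcol : ∀ i, a (i+1) * (a (i+1) * a i) = a (i+1) * (a i * a (i+1)))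
    (F : ℕ → ℕ → ℕ) (N i : ℕ) (hi : i < N) :
    a i * lpP a F N = lpP a (lpT i F) N := by
  induction N with
  | zero => omega
  | succ N ih =>
    by_cases hN : i < N
    · rw [lpP, lpP, ← mul_assoc, ih hN]
      congr 2
      funext c
      simp only [lpT, lpU]; grind
    obtain rfl : i = N := by omega
    obtain ⟨k, hk⟩ : ∃ k, lpMn i F = k := ⟨_, rfl⟩
    have sk := lpMn_spec i F
    rw [hk] at sk
    rw [lpT_eq hk]
    have hrc : ∀ m p q, p < m + 1 → q < m + 1 →
        Commute (lpV a p (m+1-p)) (lpV a q (m+1-q)) := by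
      intro m p q hp hq
      rcases le_total p q with h | h
      · exact lpV_sub a hcomm hrow hcol _ _ _ _ h (by omega)
      · exact (lpV_sub a hcomm hrow hcol _ _ _ _ h (by omega)).symm
    have hins : lpV a k (i+1-k) * lpR a i (F i) = lpR a i (lpU i k F i) := by
      refine lpL_insert (fun j => lpV a j (i+1-j)) (F i) _ (i+1) k (by omega) (hrc i) ?_ ?_
      · simp [lpU]
      · intro j hj; simp [lpU, hj]
    rcases i with _ | i
    · rw [lpP, lpP, lpP, lpP, one_mul, one_mul, ← hins]
      obtain rfl : k = 0 := by omega
      simp [lpV]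
    · rw [lpP, lpP, lpP, lpP]
      have hc := lpP_far a hcomm F i (i+1) (by omega)
      have e0 : lpP a (lpU (i+1) k F) i = lpP a F i := by
        apply lpP_congr
        intro m hm j hj
        simp only [lpU]; grind
      rw [e0, ← hins]
      simp only [← mul_assoc]
      rw [hc.eq]
      congr 1
      simp only [mul_assoc]
      congr 1
      simp only [Nat.add_sub_cancel] at sk
      by_cases hki : k = i + 1
      · subst hki
        have z1 : lpR a i (F i) = 1 := lpL_zero _ _ _ fun j hj => sk.2 j hj
        have z2 : lpR a i (lpU (i+1) (i+1) F i) = 1 := lpL_zero _ _ _ fun j hj => by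
          have := sk.2 j hj
          simp only [lpU]; grind
        rw [z1, z2]
        have : i + 1 + 1 - (i+1) = 1 := by omega
        rw [this]
        simp [lpV]
      · have hk0 : 0 < F i k := by omega
        have hins' : lpV a k (i+1-k) * lpR a i (lpU (i+1) k F i) = lpR a i (F i) := by
          refine lpL_insert (fun j => lpV a j (i+1-j)) _ _ (i+1) k (by omega) (hrc i) ?_ ?_
          · simp only [lpU]; grind
          · intro j hj; simp [lpU, hj]
        have hv : lpV a k (i+1+1-k) = a (i+1) * lpV a k (i+1-k) := by
          have : i + 1 + 1 - k = (i + 1 - k) + 1 := by omega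
          rw [this, lpV]
          congr 2; omega
        have hcm : Commute (lpV a k (i+1+1-k)) (lpR a i (lpU (i+1) k F i)) := by
          refine lpL_commute _ _ _ _ fun j hj h0 => ?_
          apply lpV_sub a hcomm hrow hcol
          · by_contra hlt
            have := sk.2 j (by omega)
            simp only [lpU] at h0
            grind
          · omega
        rw [← hcm.eq, ← hins', hv, mul_assoc]

end alg

section act
variable {A S : Type*} [Monoid A] (a : ℕ → A) (Act : A → (ℕ → ℕ → ℕ) → (ℕ → ℕ → ℕ) → Prop)

theorem lpV_act (N : ℕ) (hone : ∀ F, Act 1 F F)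
    (hmul : ∀ x y F G H, Act x G H → Act y F G → Act (x*y) F H)
    (hgen : ∀ i < N, ∀ F, Act (a i) F (lpT i F))
    (j l : ℕ) (hl : j + l < N) (F : ℕ → ℕ → ℕ) (hF : ∀ m < j + l, ∀ c, F m c = 0) :
    Act (lpV a j (l+1)) F (fun m c => F m c + if m = j + l ∧ c = j then 1 else 0) := by
  induction l with
  | zero =>
    have e : lpMn j F = j := by
      apply lpMn_eq (Or.inl rfl)
      intro c hc; exact hF _ (by omega) _
    have h := hgen j (by omega) F
    rw [lpT_eq e] at h
    simp only [lpV, mul_one, add_zero]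
    convert h using 1
    funext m c
    simp only [lpU]; grind
  | succ l ih =>
    have h1 := ih (by omega) (fun m hm => hF m (by omega))
    rw [lpV]
    refine hmul _ _ _ _ _ ?_ h1
    have h := hgen (j+(l+1)) (by omega) (fun m c => F m c + if m = j + l ∧ c = j then 1 else 0)
    rw [lpT_eq (k := j)] at h
    · convert h using 1
      funext m c
      have := hF m
      simp only [lpU]; grind
    · apply lpMn_eq
      · right; refine ⟨by omega, ?_⟩
        simp only; grind
      · intro c hc
        have := hF (j+(l+1)-1) (by omega) c
        grind

theorem lpPow_act (hone : ∀ F, Act 1 F F)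
    (hmul : ∀ x y F G H, Act x G H → Act y F G → Act (x*y) F H) (x : A) (p q : ℕ)
    (hx : ∀ F : ℕ → ℕ → ℕ, (∀ m < p, ∀ c, F m c = 0) →
      Act x F (fun m c => F m c + if m = p ∧ c = q then 1 else 0)) (t : ℕ)
    (F : ℕ → ℕ → ℕ) (hF : ∀ m < p, ∀ c, F m c = 0) :
    Act (x ^ t) F (fun m c => F m c + if m = p ∧ c = q then t else 0) := by
  induction t with
  | zero => simpa using hone F
  | succ t ih =>
    rw [pow_succ']
    refine hmul _ _ _ _ _ ?_ ih
    convert hx (fun m c => F m c + if m = p ∧ c = q then t else 0) ?_ using 1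
    · funext m c; grind
    · intro m hm c
      have := hF m hm c
      grind

theorem lpL_act (hone : ∀ F, Act 1 F F)
    (hmul : ∀ x y F G H, Act x G H → Act y F G → Act (x*y) F H) (x : ℕ → A) (p M : ℕ)
    (hx : ∀ q < M, ∀ F : ℕ → ℕ → ℕ, (∀ m < p, ∀ c, F m c = 0) →
      Act (x q) F (fun m c => F m c + if m = p ∧ c = q then 1 else 0)) (f : ℕ → ℕ)
    (F : ℕ → ℕ → ℕ) (hF : ∀ m < p, ∀ c, F m c = 0) :
    Act (lpL x f M) F (fun m c => F m c + if m = p ∧ c < M then f c else 0) := by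
  induction M generalizing F with
  | zero => simpa [lpL] using hone F
  | succ M ih =>
    rw [lpL]
    refine hmul _ _ _ _ _ ?_ (lpPow_act Act hone hmul (x M) p M (hx M (by omega)) (f M) F hF)
    convert ih (fun q hq => hx q (by omega))
      (fun m c => F m c + if m = p ∧ c = M then f M else 0) ?_ using 1
    · funext m c; grind
    · intro m hm c
      have := hF m hm c
      grind

theorem lpP_act (N : ℕ) (hone : ∀ F, Act 1 F F)
    (hmul : ∀ x y F G H, Act x G H → Act y F G → Act (x*y) F H)
    (hgen : ∀ i < N, ∀ F, Act (a i) F (lpT i F)) (E : ℕ → ℕ → ℕ) (K : ℕ) (hK : K ≤ N)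
    (F : ℕ → ℕ → ℕ) (hF : ∀ m < K, ∀ c, F m c = 0) :
    Act (lpP a E K) F (fun m c => F m c + if m < K ∧ c ≤ m then E m c else 0) := by
  induction K generalizing F with
  | zero => simpa [lpP] using hone F
  | succ K ih =>
    rw [lpP]
    have h1 := lpL_act Act hone hmul (fun j => lpV a j (K+1-j)) K (K+1) (by
      intro q hq G hG
      have := lpV_act a Act N hone hmul hgen q (K - q) (by omega) G
        (fun m hm => hG m (by omega))
      have e1 : q + (K - q) = K := by omega
      have e2 : K - q + 1 = K + 1 - q := by omega
      rw [e1, e2] at this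
      exact this) (E K) F (fun m hm => hF m (by omega))
    refine hmul _ _ _ _ _ ?_ h1
    convert ih (by omega) (fun m c => F m c + if m = K ∧ c < K + 1 then E K c else 0) ?_ using 1
    · funext m c; grind
    · intro m hm c
      have := hF m (by omega) c
      grind

end act

def lpA (n : ℕ) (i : ℕ) : PlFin n := if h : i < n - 1 then aF n ⟨i, h⟩ else 0

theorem lpA_comm (n i j : ℕ) (h : i + 1 < j) : lpA n i * lpA n j = lpA n j * lpA n i := by
  unfold lpA
  by_cases hj : j < n - 1
  · have hi : i < n - 1 := by omega
    rw [dif_pos hj, dif_pos hi]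
    simp only [aF, ← map_mul]
    exact RingQuot.mkAlgHom_rel ℂ (PlFinRel.comm _ _ (Or.inl h))
  · rw [dif_neg hj]; simp

theorem lpA_row (n i : ℕ) :
    lpA n (i+1) * (lpA n i * lpA n i) = lpA n i * (lpA n (i+1) * lpA n i) := by
  unfold lpA
  by_cases hj : i + 1 < n - 1
  · have hi : i < n - 1 := by omega
    rw [dif_pos hj, dif_pos hi]
    simp only [aF, ← map_mul]
    exact RingQuot.mkAlgHom_rel ℂ (PlFinRel.row _ _ rfl)
  · rw [dif_neg hj]; simp

theorem lpA_col (n i : ℕ) :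
    lpA n (i+1) * (lpA n (i+1) * lpA n i) = lpA n (i+1) * (lpA n i * lpA n (i+1)) := by
  unfold lpA
  by_cases hj : i + 1 < n - 1
  · have hi : i < n - 1 := by omega
    rw [dif_pos hj, dif_pos hi]
    simp only [aF, ← map_mul]
    exact RingQuot.mkAlgHom_rel ℂ (PlFinRel.col _ _ rfl)
  · rw [dif_neg hj]; simp

theorem lpV_list {A : Type*} [Monoid A] (a : ℕ → A) (j l m : ℕ) (h : m + 1 = j + l) :
    ((List.range l).map fun t => a (m - t)).prod = lpV a j l := by
  induction l generalizing m with
  | zero => rfl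
  | succ l ih =>
    rw [List.range_succ_eq_map, List.map_cons, List.prod_cons, List.map_map, lpV]
    have hm : m = j + l := by omega
    congr 1
    · rw [hm]; rfl
    · rcases l with _ | l
      · rfl
      · rw [← ih (m - 1) (by omega)]
        congr 2
        funext t
        simp only [Function.comp]
        congr 1; omega

theorem lpWmon (n : ℕ) (m : Fin (n-1)) (j : Fin ((m : ℕ) + 1)) :
    wmon n m j = lpV (lpA n) j ((m : ℕ) + 1 - j) := by
  rw [← lpV_list (lpA n) j _ m (by omega)]
  unfold wmon
  congr 2
  funext t
  rw [lpA, dif_pos]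

theorem lpL_list {A : Type*} [Monoid A] (x : ℕ → A) (f : ℕ → ℕ) (M : ℕ) :
    ((List.range M).map fun j => x j ^ f j).prod = lpL x f M := by
  induction M with
  | zero => rfl
  | succ M ih => rw [List.range_succ, List.map_append, List.prod_append, ih]; simp [lpL]

theorem lpP_list {A : Type*} [Monoid A] (a : ℕ → A) (F : ℕ → ℕ → ℕ) (M : ℕ) :
    ((List.range M).map fun m => lpR a m (F m)).prod = lpP a F M := by
  induction M with
  | zero => rfl
  | succ M ih => rw [List.range_succ, List.map_append, List.prod_append, ih]; simp [lpP]

theorem lpFinRange {A : Type*} (N : ℕ) (g : ℕ → A) :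
    (List.finRange N).map (fun m : Fin N => g m.val) = (List.range N).map g := by
  rw [← List.map_coe_finRange_eq_range, List.map_map]; rfl

theorem lpFamMon (n : ℕ) (F : ℕ → ℕ → ℕ) :
    famMon n (fun p => F p.1 p.2) = lpP (lpA n) F (n-1) := by
  rw [← lpP_list, ← lpFinRange]
  unfold famMon
  congr 2
  funext m
  rw [lpR, ← lpL_list, ← lpFinRange]
  congr 2
  funext j
  rw [lpWmon]

def lpExt (n : ℕ) (α : MonIdx n → ℕ) : ℕ → ℕ → ℕ := fun m j =>
  if h : m < n - 1 ∧ j < m + 1 then α ⟨⟨m, h.1⟩, ⟨j, h.2⟩⟩ else 0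

theorem lpExt_res (n : ℕ) (α : MonIdx n → ℕ) : (fun p : MonIdx n => lpExt n α p.1 p.2) = α := by
  funext p
  obtain ⟨m, j⟩ := p
  unfold lpExt
  rw [dif_pos ⟨m.2, j.2⟩]

theorem lpFamMon' (n : ℕ) (α : MonIdx n → ℕ) : famMon n α = lpP (lpA n) (lpExt n α) (n-1) := by
  rw [← lpFamMon, lpExt_res]

def lpOp (i : ℕ) : Module.End ℂ ((ℕ → ℕ → ℕ) →₀ ℂ) := Finsupp.lmapDomain ℂ ℂ (lpT i)

theorem lpOp_single (i : ℕ) (F : ℕ → ℕ → ℕ) (c : ℂ) :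
    lpOp i (Finsupp.single F c) = Finsupp.single (lpT i F) c := by
  simp [lpOp, Finsupp.mapDomain_single]

def lpPhi (n : ℕ) : PlFin n →ₐ[ℂ] Module.End ℂ ((ℕ → ℕ → ℕ) →₀ ℂ) :=
  RingQuot.liftAlgHom ℂ ⟨FreeAlgebra.lift ℂ (fun i : Fin (n-1) => lpOp i), by
    intro x y h
    induction h with
    | comm i j h =>
      simp only [g1, map_mul, FreeAlgebra.lift_ι_apply]
      refine Finsupp.lhom_ext fun F c => ?_
      simp only [Module.End.mul_apply, lpOp_single]
      rcases h with h | h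
      · rw [lpT_comm h]
      · rw [lpT_comm h]
    | row i j h =>
      simp only [g1, map_mul, FreeAlgebra.lift_ι_apply]
      refine Finsupp.lhom_ext fun F c => ?_
      simp only [Module.End.mul_apply, lpOp_single, h]
      rw [lpT_row]
    | col i j h =>
      simp only [g1, map_mul, FreeAlgebra.lift_ι_apply]
      refine Finsupp.lhom_ext fun F c => ?_
      simp only [Module.End.mul_apply, lpOp_single, h]
      rw [lpT_col]⟩

theorem lpPhi_a (n i : ℕ) (h : i < n - 1) : lpPhi n (lpA n i) = lpOp i := by
  rw [lpA, dif_pos h, aF, lpPhi, RingQuot.liftAlgHom_mkAlgHom_apply, g1, FreeAlgebra.lift_ι_apply]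

theorem lpPhi_fam (n : ℕ) (α : MonIdx n → ℕ) :
    lpPhi n (famMon n α) (Finsupp.single (fun _ _ => 0) 1) = Finsupp.single (lpExt n α) 1 := by
  have h := lpP_act (lpA n)
    (fun x F G => lpPhi n x (Finsupp.single F 1) = Finsupp.single G 1) (n-1)
    (fun F => by simp)
    (fun x y F G H h1 h2 => by rw [map_mul, Module.End.mul_apply, h2, h1])
    (fun i hi F => by rw [lpPhi_a n i hi, lpOp_single])
    (lpExt n α) (n-1) le_rfl (fun _ _ => 0) (fun _ _ _ => rfl)
  rw [lpFamMon']
  refine h.trans ?_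
  congr 1
  funext m c
  simp only [lpExt]
  grind

theorem lpExt_inj (n : ℕ) : Function.Injective (lpExt n) := by
  intro α β h
  rw [← lpExt_res n α, h, lpExt_res]

/-- The monomials `∏_{m=1}^{n-1} ∏_{j=1}^{m} w_{m,j}^{α_{m,j}}`, over all
exponent vectors `α`, form a ℂ-basis of the local plactic algebra `Pl_fin`. -/
theorem local_plactic_basis (n : ℕ) (hn : 2 ≤ n) :
    LinearIndependent ℂ (famMon n) ∧
      Submodule.span ℂ (Set.range (famMon n)) = ⊤ := by
  constructor
  · have h1 : LinearIndependent ℂ (fun α : MonIdx n → ℕ =>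
        (Finsupp.single (lpExt n α) 1 : (ℕ → ℕ → ℕ) →₀ ℂ)) :=
      (Finsupp.linearIndependent_single_one ℂ (ℕ → ℕ → ℕ)).comp _ (lpExt_inj n)
    refine LinearIndependent.of_comp
      ((LinearMap.applyₗ (Finsupp.single (fun _ _ => 0) 1 : (ℕ → ℕ → ℕ) →₀ ℂ)).comp
        (lpPhi n).toLinearMap) ?_
    convert h1 using 1
    funext α
    exact lpPhi_fam n α
  · have hgen : ∀ (i : Fin (n-1)) (x : PlFin n), x ∈ Submodule.span ℂ (Set.range (famMon n)) →
        aF n i * x ∈ Submodule.span ℂ (Set.range (famMon n)) := by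
      intro i x hx
      induction hx using Submodule.span_induction with
      | mem x hx =>
        obtain ⟨α, rfl⟩ := hx
        have h := lpP_mul (lpA n) (lpA_comm n) (lpA_row n) (lpA_col n) (lpExt n α) (n-1) i i.2
        rw [← lpFamMon', ← lpFamMon] at h
        rw [lpA, dif_pos i.2] at h
        rw [h]
        exact Submodule.subset_span ⟨_, rfl⟩
      | zero => simp
      | add x y _ _ hx hy => rw [mul_add]; exact Submodule.add_mem _ hx hy
      | smul c x _ hx => rw [mul_smul_comm]; exact Submodule.smul_mem _ _ hx
    have hall : ∀ (y : FreeAlgebra ℂ (Fin (n-1))) (x : PlFin n),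
        x ∈ Submodule.span ℂ (Set.range (famMon n)) →
        RingQuot.mkAlgHom ℂ (PlFinRel n) y * x ∈ Submodule.span ℂ (Set.range (famMon n)) := by
      intro y
      induction y using FreeAlgebra.induction with
      | grade0 r =>
        intro x hx
        rw [AlgHom.commutes, ← Algebra.smul_def]
        exact Submodule.smul_mem _ _ hx
      | grade1 i => exact hgen i
      | mul y z hy hz =>
        intro x hx
        rw [map_mul, mul_assoc]
        exact hy _ (hz _ hx)
      | add y z hy hz =>
        intro x hx
        rw [map_add, add_mul]
        exact Submodule.add_mem _ (hy _ hx) (hz _ hx)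
    have hone : (1 : PlFin n) ∈ Submodule.span ℂ (Set.range (famMon n)) := by
      refine Submodule.subset_span ⟨fun _ => 0, ?_⟩
      simp [famMon]
    rw [eq_top_iff]
    intro z _
    obtain ⟨y, rfl⟩ := RingQuot.mkAlgHom_surjective ℂ (PlFinRel n) z
    simpa using hall y 1 hone
end
end

section
/- Let n ≥ 2 and let Pl be the local affine plactic algebra. For 1 ≤ r ≤ n−1 define e_r ∈ Pl as the sum, over all r-element subsets I ⊆ ℤ/nℤ, of the product of the generators a_i with i ∈ I taken in any order in which a_j stands to the left of a_i whenever i, j ∈ I and j ≡ i+1 (mod n) (each such summand is a well-defined element of Pl, since a_i and a_j commute in Pl whenever i − j ≢ ±1 mod n, so all admissible orders give the same element). Then the cyclic noncommutative elementary symmetric polynomials pairwise commute: e_r·e_s = e_s·e_r in Pl for all 1 ≤ r, s ≤ n−1. -/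
noncomputable section

open scoped BigOperators

/-- The generator `a_i` of the free algebra on `a_0, …, a_{n-1}`. -/
def agen (n : ℕ) (i : ZMod n) : FreeAlgebra ℂ (ZMod n) := FreeAlgebra.ι ℂ i

/-- The defining relations of the local affine plactic algebra `Pl`. -/
inductive PlRel (n : ℕ) : FreeAlgebra ℂ (ZMod n) → FreeAlgebra ℂ (ZMod n) → Prop
  | comm (i j : ZMod n) (h1 : i - j ≠ 1) (h2 : j - i ≠ 1) :
      PlRel n (agen n i * agen n j) (agen n j * agen n i)
  | row (i : ZMod n) :
      PlRel n (agen n (i + 1) * (agen n i * agen n i)) (agen n i * (agen n (i + 1) * agen n i))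
  | col (i : ZMod n) :
      PlRel n (agen n (i + 1) * (agen n (i + 1) * agen n i))
        (agen n (i + 1) * (agen n i * agen n (i + 1)))

/-- The local affine plactic algebra. -/
abbrev Pl (n : ℕ) := RingQuot (PlRel n)

/-- The generator `a_i` as an element of `Pl`. -/
def aPl (n : ℕ) (i : ZMod n) : Pl n := RingQuot.mkAlgHom ℂ (PlRel n) (agen n i)

/-- A canonical "gap" of a proper subset `I ⊊ ℤ/nℤ`: the element of the complement with
the smallest representative. -/
def zgap {n : ℕ} [NeZero n] (I : Finset (ZMod n)) : ZMod n :=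
  if h : ((Finset.univ \ I).image ZMod.val).Nonempty then
    ((((Finset.univ \ I).image ZMod.val).min' h : ℕ) : ZMod n)
  else 0

/-- The cyclically ordered product `∏_{i ∈ I} a_i` in which, whenever `i, i+1 ∈ I`, the
factor `a_{i+1}` stands to the left of the factor `a_i`: the factors are multiplied in
cyclically decreasing order starting just below a gap of `I`. -/
def cycProdDesc {n : ℕ} [NeZero n] {A : Type*} [Monoid A] (a : ZMod n → A)
    (I : Finset (ZMod n)) : A :=
  ((List.range n).map fun t =>
    if zgap I - 1 - (t : ZMod n) ∈ I then a (zgap I - 1 - (t : ZMod n)) else 1).prod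

/-- The cyclic noncommutative elementary symmetric polynomial `e_r ∈ Pl`. -/
def plE (n : ℕ) [NeZero n] (r : ℕ) : Pl n :=
  ∑ I ∈ Finset.powersetCard r (Finset.univ : Finset (ZMod n)), cycProdDesc (aPl n) I


namespace PlAux

lemma sum_range_cast {n : ℕ} [NeZero n] (f : ZMod n → ℕ) :
    ∑ t ∈ Finset.range n, f (t : ZMod n) = ∑ p, f p := by
  refine Finset.sum_bij (fun t _ => (t : ZMod n)) (by simp) ?_ ?_ (by simp)
  · intro x hx y hy h
    rw [Finset.mem_range] at hx hy
    have := congrArg ZMod.val h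
    rwa [ZMod.val_natCast_of_lt hx, ZMod.val_natCast_of_lt hy] at this
  · intro b _
    exact ⟨b.val, Finset.mem_range.2 (ZMod.val_lt b), ZMod.natCast_zmod_val b⟩

lemma sum_shift {n : ℕ} [NeZero n] (f : ZMod n → ℕ) : ∑ p, f (p - 1) = ∑ p, f p :=
  Equiv.sum_comp (Equiv.subRight (1 : ZMod n)) f

lemma exists_super {n : ℕ} [NeZero n] (u v : ZMod n → ℕ) (hv : ∀ p, v p ≤ 1)
    (h : ∑ p, u p ≤ ∑ p, v p) :
    ∃ m : ZMod n → ℕ, ∀ p, m (p - 1) + u p ≤ m p + v p := by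
  have hb : ∀ k, ∑ t ∈ Finset.range k, v (t : ZMod n) ≤ k := by
    intro k
    calc _ ≤ ∑ t ∈ Finset.range k, 1 := Finset.sum_le_sum (fun _ _ => hv _)
      _ = k := by simp
  refine ⟨fun p => (n + ∑ t ∈ Finset.range (p.val + 1), u (t : ZMod n))
      - ∑ t ∈ Finset.range (p.val + 1), v (t : ZMod n), fun p => ?_⟩
  obtain ⟨k, hk, rfl⟩ : ∃ k : ℕ, k < n ∧ (k : ZMod n) = p :=
    ⟨p.val, ZMod.val_lt p, ZMod.natCast_zmod_val p⟩
  have hpos : 0 < n := Nat.pos_of_ne_zero (NeZero.ne n)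
  rcases k with _ | j
  · have e : ((0 : ℕ) : ZMod n) - 1 = ((n - 1 : ℕ) : ZMod n) := by
      rw [Nat.cast_sub (by omega)]; simp
    rw [e]
    simp only [ZMod.val_natCast_of_lt hk, ZMod.val_natCast_of_lt (show n - 1 < n by omega)]
    rw [Nat.sub_add_cancel (by omega : 1 ≤ n), sum_range_cast u, sum_range_cast v]
    have := hv ((0 : ℕ) : ZMod n)
    simp only [zero_add, Finset.sum_range_one]
    omega
  · have e : ((j + 1 : ℕ) : ZMod n) - 1 = ((j : ℕ) : ZMod n) := by push_cast; ring
    rw [e]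
    simp only [ZMod.val_natCast_of_lt hk, ZMod.val_natCast_of_lt (show j < n by omega)]
    rw [Finset.sum_range_succ _ (j + 1), Finset.sum_range_succ _ (j + 1)]
    have h1 := hb (j + 1)
    have h2 := hv ((j + 1 : ℕ) : ZMod n)
    omega

lemma exists_queue {n : ℕ} [NeZero n] (hn : 2 ≤ n) (u v : ZMod n → ℕ) (hv : ∀ p, v p ≤ 1)
    (h : ∑ p, u p ≤ ∑ p, v p) :
    ∃ m : ZMod n → ℕ, ∀ p, m p = (m (p - 1) + u p) - v p := by
  classical
  have : Fact (1 < n) := ⟨hn⟩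
  have hex : ∃ N : ℕ, ∃ m : ZMod n → ℕ, (∀ p, m (p - 1) + u p ≤ m p + v p) ∧ ∑ p, m p = N := by
    obtain ⟨m, hm⟩ := exists_super u v hv h
    exact ⟨_, m, hm, rfl⟩
  obtain ⟨m, hm, hs⟩ := Nat.find_spec hex
  refine ⟨m, fun p => ?_⟩
  by_contra hne
  have hlt : (m (p - 1) + u p) - v p < m p := by have := hm p; omega
  have hp1 : p - 1 ≠ p := by simp
  refine Nat.find_min hex (m := ∑ q, Function.update m p ((m (p - 1) + u p) - v p) q) ?_
    ⟨_, fun q => ?_, rfl⟩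
  · rw [← hs]
    refine Finset.sum_lt_sum (fun q _ => ?_) ⟨p, Finset.mem_univ _, by simpa using hlt⟩
    by_cases hq : q = p
    · subst hq; simpa using hlt.le
    · simp [hq]
  · by_cases hq : q = p
    · subst hq
      simp only [Function.update_self, Function.update_of_ne hp1]
      omega
    · have := hm q
      by_cases hq' : q - 1 = p
      · rw [hq', Function.update_self, Function.update_of_ne hq]
        rw [hq'] at this
        omega
      · rw [Function.update_of_ne hq', Function.update_of_ne hq]
        exact this

lemma propagate {n : ℕ} [NeZero n] (P : ZMod n → Prop) (h : ∀ p, P p → P (p - 1))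
    (p₀ : ZMod n) (h0 : P p₀) : ∀ p, P p := by
  have key : ∀ k : ℕ, P (p₀ - k) := by
    intro k
    induction k with
    | zero => simpa using h0
    | succ k ih => have := h _ ih; rwa [sub_sub, ← Nat.cast_succ] at this
  intro p
  have := key (p₀ - p).val
  rwa [ZMod.natCast_zmod_val, sub_sub_cancel] at this

lemma queue_unique_aux {n : ℕ} [NeZero n] (u v : ZMod n → ℕ)
    (h : ∑ p, u p < ∑ p, v p) (m₁ m₂ : ZMod n → ℕ)
    (h₁ : ∀ p, m₁ (p - 1) = (m₁ p + u p) - v p)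
    (h₂ : ∀ p, m₂ (p - 1) = (m₂ p + u p) - v p)
    (h0 : m₁ 0 ≤ m₂ 0) : m₁ = m₂ := by
  have hle : ∀ p, m₁ p ≤ m₂ p :=
    propagate _ (fun p hp => by rw [h₁, h₂]; omega) 0 h0
  by_cases he : ∃ p, m₁ p = m₂ p
  · obtain ⟨p₀, hp₀⟩ := he
    exact funext (propagate (fun p => m₁ p = m₂ p) (fun p hp => by rw [h₁, h₂]; omega) p₀ hp₀)
  · push Not at he
    exfalso
    have hp : ∀ p, m₂ (p - 1) + v p = m₂ p + u p := by
      intro p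
      have := hle (p - 1)
      have := he (p - 1)
      have := h₂ p
      omega
    have hs : ∑ p, (m₂ (p - 1) + v p) = ∑ p, (m₂ p + u p) :=
      Finset.sum_congr rfl (fun p _ => hp p)
    rw [Finset.sum_add_distrib, Finset.sum_add_distrib, sum_shift] at hs
    omega

lemma queue_unique {n : ℕ} [NeZero n] (u v : ZMod n → ℕ)
    (h : ∑ p, u p < ∑ p, v p) (m₁ m₂ : ZMod n → ℕ)
    (h₁ : ∀ p, m₁ (p - 1) = (m₁ p + u p) - v p)
    (h₂ : ∀ p, m₂ (p - 1) = (m₂ p + u p) - v p) : m₁ = m₂ := by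
  rcases le_total (m₁ 0) (m₂ 0) with h0 | h0
  · exact queue_unique_aux u v h m₁ m₂ h₁ h₂ h0
  · exact (queue_unique_aux u v h m₂ m₁ h₂ h₁ h0).symm

/-- indicator -/
def ind {n : ℕ} (I : Finset (ZMod n)) (p : ZMod n) : ℕ := if p ∈ I then 1 else 0

lemma sum_ind {n : ℕ} [NeZero n] (I : Finset (ZMod n)) : ∑ p, ind I p = I.card := by
  simp [ind]

lemma exists_m {n : ℕ} [NeZero n] (hn : 2 ≤ n) (I J : Finset (ZMod n)) (h : I.card ≤ J.card) :
    ∃ m : ZMod n → ℕ, ∀ p, m p = (m (p - 1) + ind I p) - ind J p :=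
  exists_queue hn _ _ (fun p => by unfold ind; split_ifs <;> simp) (by simpa [sum_ind] using h)

open Classical in
/-- the queue length function -/
def mm {n : ℕ} [NeZero n] (I J : Finset (ZMod n)) : ZMod n → ℕ :=
  if h : ∃ m : ZMod n → ℕ, ∀ p, m p = (m (p - 1) + ind I p) - ind J p then h.choose else fun _ => 0

lemma mm_spec {n : ℕ} [NeZero n] (hn : 2 ≤ n) (I J : Finset (ZMod n)) (h : I.card ≤ J.card) :
    ∀ p, mm I J p = (mm I J (p - 1) + ind I p) - ind J p := by
  have hx := exists_m hn I J h
  unfold mm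
  rw [dif_pos hx]
  exact hx.choose_spec

/-- the set of moved letters -/
def KK {n : ℕ} [NeZero n] (I J : Finset (ZMod n)) : Finset (ZMod n) :=
  J.filter (fun p => mm I J (p - 1) = 0)

/-- the bijection -/
def Phi {n : ℕ} [NeZero n] (x : Finset (ZMod n) × Finset (ZMod n)) :
    Finset (ZMod n) × Finset (ZMod n) :=
  (x.1 ∪ KK x.1 x.2, (x.2 \ KK x.1 x.2) ∪ (x.1 ∩ KK x.1 x.2))

section facts
variable {n : ℕ} [NeZero n] (I J : Finset (ZMod n))

lemma mem_Phi1 (p : ZMod n) : p ∈ (Phi (I, J)).1 ↔ p ∈ I ∨ (p ∈ J ∧ mm I J (p - 1) = 0) := by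
  simp [Phi, KK]

lemma mem_Phi2 (p : ZMod n) : p ∈ (Phi (I, J)).2 ↔ p ∈ J ∧ (p ∈ I ∨ mm I J (p - 1) ≠ 0) := by
  simp [Phi, KK]; tauto

lemma card1 (hn : 2 ≤ n) (h : I.card ≤ J.card) : (Phi (I, J)).1.card = J.card := by
  have key : ∀ p, mm I J p + ind J p = mm I J (p - 1) + ind (Phi (I, J)).1 p := by
    intro p
    have := mm_spec hn I J h p
    simp only [ind, mem_Phi1] at *
    split_ifs at * <;> first | omega | tauto | grind
  have hs := Finset.sum_congr (rfl : (Finset.univ : Finset (ZMod n)) = _) (fun p _ => key p)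
  rw [Finset.sum_add_distrib, Finset.sum_add_distrib, sum_shift, sum_ind, sum_ind] at hs
  omega

lemma card2 (hn : 2 ≤ n) (h : I.card ≤ J.card) : (Phi (I, J)).2.card = I.card := by
  have key : ∀ p, ind (Phi (I, J)).1 p + ind (Phi (I, J)).2 p = ind I p + ind J p := by
    intro p
    simp only [ind, mem_Phi1, mem_Phi2] at *
    split_ifs at * <;> first | omega | tauto | grind
  have hs := Finset.sum_congr (rfl : (Finset.univ : Finset (ZMod n)) = _) (fun p _ => key p)
  rw [Finset.sum_add_distrib, Finset.sum_add_distrib, sum_ind, sum_ind, sum_ind, sum_ind] at hs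
  have := card1 I J hn h
  omega

lemma mm_rev (hn : 2 ≤ n) (h : I.card ≤ J.card) (p : ZMod n) :
    mm I J (p - 1) = (mm I J p + ind (Phi (I, J)).2 p) - ind (Phi (I, J)).1 p := by
  have := mm_spec hn I J h p
  simp only [ind, mem_Phi1, mem_Phi2] at *
  split_ifs at * <;> first | omega | tauto | grind

lemma recover1 (hn : 2 ≤ n) (h : I.card ≤ J.card) (p : ZMod n) :
    p ∈ I ↔ p ∈ (Phi (I, J)).1 ∧ (p ∈ (Phi (I, J)).2 ∨ mm I J p ≠ 0) := by
  have := mm_spec hn I J h p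
  simp only [ind, mem_Phi1, mem_Phi2] at *
  split_ifs at * <;> grind

lemma recover2 (hn : 2 ≤ n) (h : I.card ≤ J.card) (p : ZMod n) :
    p ∈ J ↔ p ∈ (Phi (I, J)).2 ∨ (p ∈ (Phi (I, J)).1 ∧ mm I J p = 0) := by
  have := mm_spec hn I J h p
  simp only [ind, mem_Phi1, mem_Phi2] at *
  split_ifs at * <;> grind

end facts

lemma Phi_inj {n : ℕ} [NeZero n] (hn : 2 ≤ n) (I J I' J' : Finset (ZMod n))
    (h : I.card < J.card) (h' : I'.card < J'.card) (he : Phi (I, J) = Phi (I', J')) :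
    (I, J) = (I', J') := by
  have hm : mm I J = mm I' J' := by
    refine queue_unique (ind (Phi (I, J)).2) (ind (Phi (I, J)).1) ?_ _ _
      (mm_rev I J hn h.le) ?_
    · rw [sum_ind, sum_ind, card1 I J hn h.le, card2 I J hn h.le]; exact h
    · rw [he]; exact mm_rev I' J' hn h'.le
  refine Prod.ext (Finset.ext fun p => ?_) (Finset.ext fun p => ?_)
  · show p ∈ I ↔ p ∈ I'
    rw [recover1 I J hn h.le, recover1 I' J' hn h'.le, he, hm]
  · show p ∈ J ↔ p ∈ J'
    rw [recover2 I J hn h.le, recover2 I' J' hn h'.le, he, hm]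

section algebra
variable {n : ℕ} {A : Type*} [Monoid A] (a : ZMod n → A)

lemma comm_list (x : ZMod n) (l : List (ZMod n)) (h : ∀ y ∈ l, Commute (a x) (a y)) :
    Commute (a x) (l.map a).prod := by
  apply Commute.list_prod_right
  intro z hz
  obtain ⟨y, hy, rfl⟩ := List.mem_map.1 hz
  exact h y hy

lemma prod_eq_of_perm (hn : 2 ≤ n)
    (hc : ∀ i j : ZMod n, i - j ≠ 1 → j - i ≠ 1 → a i * a j = a j * a i) :
    ∀ l₁ l₂ : List (ZMod n), l₁.Perm l₂ → l₁.Pairwise (fun x y => y ≠ x + 1) →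
      l₂.Pairwise (fun x y => y ≠ x + 1) → (l₁.map a).prod = (l₂.map a).prod := by
  have : Fact (1 < n) := ⟨hn⟩
  intro l₁
  induction l₁ with
  | nil => intro l₂ hp _ _; rw [List.nil_perm.1 hp]
  | cons x l ih =>
    intro l₂ hp h1 h2
    obtain ⟨u, v, rfl⟩ := List.append_of_mem (hp.subset List.mem_cons_self)
    have hp' : l.Perm (u ++ v) := by
      have := hp.trans List.perm_middle
      exact (List.perm_cons x).1 this
    rw [List.pairwise_cons] at h1
    have h2' : (u ++ v).Pairwise (fun x y => y ≠ x + 1) :=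
      h2.sublist (List.Sublist.append_left (List.sublist_cons_self x v) u)
    rw [List.map_cons, List.prod_cons, ih _ hp' h1.2 h2']
    have hcm : Commute (a x) (u.map a).prod := by
      refine comm_list a x u fun y hy => hc _ _ ?_ ?_
      · have := (List.pairwise_append.1 h2).2.2 y hy x (by simp)
        intro h; apply this; rw [← h]; ring
      · have := h1.1 y (hp'.symm.subset (by simp [hy]))
        intro h; apply this; rw [← h]; ring
    simp only [List.map_append, List.prod_append, List.map_cons, List.prod_cons]
    rw [← mul_assoc, hcm.eq, mul_assoc]

variable [NeZero n]

/-- the ordered word of `I` -/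
def wd (I : Finset (ZMod n)) : List (ZMod n) :=
  ((List.range n).map fun t : ℕ => zgap I - 1 - (t : ZMod n)).filter (· ∈ I)

lemma prod_filter (p : ZMod n → Bool) (l : List (ZMod n)) :
    (l.map fun x => if p x then a x else 1).prod = ((l.filter p).map a).prod := by
  induction l with
  | nil => simp
  | cons x l ih => by_cases h : p x <;> simp [h, ih]

lemma cyc_eq (I : Finset (ZMod n)) : cycProdDesc a I = ((wd I).map a).prod := by
  rw [wd, ← prod_filter]
  simp [cycProdDesc, Function.comp_def, ← List.map_eq_flatMap]

lemma mem_wd (I : Finset (ZMod n)) (x : ZMod n) : x ∈ wd I ↔ x ∈ I := by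
  simp only [wd, List.mem_filter, List.mem_map, List.mem_range, decide_eq_true_eq,
    and_iff_right_iff_imp]
  intro _
  exact ⟨(zgap I - 1 - x).val, ZMod.val_lt _, by rw [ZMod.natCast_zmod_val]; ring⟩

lemma cast_inj {s t : ℕ} (hs : s < n) (ht : t < n) (h : (s : ZMod n) = t) : s = t := by
  have := congrArg ZMod.val h
  rwa [ZMod.val_natCast_of_lt hs, ZMod.val_natCast_of_lt ht] at this

lemma nodup_wd (I : Finset (ZMod n)) : (wd I).Nodup := by
  apply List.Nodup.filter
  refine List.Nodup.map_on ?_ List.nodup_range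
  intro x hx y hy h
  exact cast_inj (List.mem_range.1 hx) (List.mem_range.1 hy) (by simpa using h)

lemma zgap_notMem (I : Finset (ZMod n)) (hI : I ≠ Finset.univ) : zgap I ∉ I := by
  have hne : ((Finset.univ \ I).image ZMod.val).Nonempty := by
    rw [Finset.image_nonempty, Finset.sdiff_nonempty]
    intro h; exact hI (Finset.univ_subset_iff.1 h)
  unfold zgap
  rw [dif_pos hne]
  have := Finset.min'_mem _ hne
  obtain ⟨x, hx, hxe⟩ := Finset.mem_image.1 this
  rw [← hxe, ZMod.natCast_zmod_val]
  simpa using hx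

lemma pairwise_wd (I : Finset (ZMod n)) (hI : I ≠ Finset.univ) :
    (wd I).Pairwise (fun x y => y ≠ x + 1) := by
  have hz := zgap_notMem I hI
  rw [wd, List.pairwise_filter, List.pairwise_map]
  refine List.Pairwise.imp_of_mem ?_ List.pairwise_lt_range
  intro s t hs ht hst _ h2 h
  rw [List.mem_range] at hs ht
  have h3 : ((t + 1 : ℕ) : ZMod n) = (s : ZMod n) := by
    push_cast; linear_combination -h
  by_cases htn : t + 1 < n
  · have := cast_inj htn hs h3; omega
  · have : t + 1 = n := by omega
    apply hz
    have e : zgap I - 1 - (t : ZMod n) = zgap I := by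
      have : ((t + 1 : ℕ) : ZMod n) = 0 := by rw [this]; simp
      push_cast at this
      linear_combination -this
    rw [e] at h2
    simpa using h2

lemma cyc_union (hn : 2 ≤ n)
    (hc : ∀ i j : ZMod n, i - j ≠ 1 → j - i ≠ 1 → a i * a j = a j * a i)
    (X Y Z : Finset (ZMod n)) (hZ : Z ≠ Finset.univ) (hXY : ∀ x ∈ X, x ∉ Y)
    (hu : ∀ x, x ∈ Z ↔ x ∈ X ∨ x ∈ Y) (ha : ∀ x ∈ X, x + 1 ∉ Y) :
    cycProdDesc a X * cycProdDesc a Y = cycProdDesc a Z := by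
  have hX : X ≠ Finset.univ := by
    rintro rfl; exact hZ (Finset.eq_univ_iff_forall.2 fun x => (hu x).2 (by simp))
  have hY : Y ≠ Finset.univ := by
    rintro rfl; exact hZ (Finset.eq_univ_iff_forall.2 fun x => (hu x).2 (by simp))
  rw [cyc_eq, cyc_eq, cyc_eq, ← List.prod_append, ← List.map_append]
  refine prod_eq_of_perm a hn hc _ _ ?_ ?_ (pairwise_wd Z hZ)
  · rw [List.perm_ext_iff_of_nodup _ (nodup_wd Z)]
    · intro x; simp [mem_wd, hu]
    · rw [List.nodup_append]
      refine ⟨nodup_wd X, nodup_wd Y, ?_⟩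
      intro x hx y hy h
      subst h
      exact hXY _ ((mem_wd _ _).1 hx) ((mem_wd _ _).1 hy)
  · rw [List.pairwise_append]
    refine ⟨pairwise_wd X hX, pairwise_wd Y hY, ?_⟩
    intro x hx y hy h
    subst h
    exact ha _ ((mem_wd _ _).1 hx) ((mem_wd _ _).1 hy)

lemma central (hn : 2 ≤ n)
    (hc : ∀ i j : ZMod n, i - j ≠ 1 → j - i ≠ 1 → a i * a j = a j * a i)
    (hr : ∀ i : ZMod n, a (i + 1) * (a i * a i) = a i * (a (i + 1) * a i))
    (hl : ∀ i : ZMod n, a (i + 1) * (a (i + 1) * a i) = a (i + 1) * (a i * a (i + 1)))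
    (K : Finset (ZMod n)) (hK : K ≠ Finset.univ) (j : ZMod n) (hj : j ∈ K) :
    Commute (a j) (cycProdDesc a K) := by
  have : Fact (1 < n) := ⟨hn⟩
  have hp := pairwise_wd K hK
  have hnd := nodup_wd K
  rw [cyc_eq]
  obtain ⟨B, C, h⟩ := List.append_of_mem ((mem_wd K j).2 hj)
  rw [h] at hp hnd ⊢
  rw [List.pairwise_append, List.pairwise_cons] at hp
  obtain ⟨-, ⟨hpC, -⟩, hpB⟩ := hp
  have hndB : B.Nodup := hnd.of_append_left
  have hndC : C.Nodup := (List.nodup_cons.1 hnd.of_append_right).2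
  have cB : ∀ y ∈ B, y ≠ j + 1 → Commute (a j) (a y) := by
    intro y hy hne
    refine hc _ _ ?_ ?_
    · intro e; exact hpB y hy j (by simp) (by rw [← e]; ring)
    · intro e; exact hne (by rw [← e]; ring)
  have cC : ∀ y ∈ C, y ≠ j - 1 → Commute (a j) (a y) := by
    intro y hy hne
    refine hc _ _ ?_ ?_
    · intro e; exact hne (by rw [← e]; ring)
    · intro e; exact hpC y hy (by rw [← e]; ring)
  have left : a j * (B.map a).prod * a j = (B.map a).prod * (a j * a j) := by
    by_cases hm : j + 1 ∈ B
    · obtain ⟨B1, B2, rfl⟩ := List.append_of_mem hm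
      have hnm := (List.nodup_middle.1 hndB)
      rw [List.nodup_cons, List.mem_append] at hnm
      have c1 : Commute (a j) (B1.map a).prod := comm_list a j B1 fun y hy =>
        cB y (by simp [hy]) (by rintro rfl; exact hnm.1 (Or.inl hy))
      have c2 : Commute (a j) (B2.map a).prod := comm_list a j B2 fun y hy =>
        cB y (by simp [hy]) (by rintro rfl; exact hnm.1 (Or.inr hy))
      simp only [List.map_append, List.prod_append, List.map_cons, List.prod_cons]
      generalize (B1.map a).prod = P at *
      generalize (B2.map a).prod = Q at *
      calc a j * (P * (a (j + 1) * Q)) * a j = (a j * P) * a (j + 1) * (Q * a j) := by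
            simp only [mul_assoc]
        _ = P * (a j * (a (j + 1) * a j)) * Q := by
            rw [c1.eq, ← c2.eq]; simp only [mul_assoc]
        _ = P * a (j + 1) * (a j * (a j * Q)) := by rw [← hr]; simp only [mul_assoc]
        _ = P * a (j + 1) * (a j * Q * a j) := by
            rw [c2.eq]; simp only [← mul_assoc]; rw [mul_assoc _ (a j) Q, c2.eq]
            simp only [← mul_assoc]
        _ = P * (a (j + 1) * Q) * (a j * a j) := by rw [c2.eq]; simp only [mul_assoc]
    · have c1 : Commute (a j) (B.map a).prod := comm_list a j B fun y hy =>
        cB y hy (by rintro rfl; exact hm hy)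
      rw [c1.eq, mul_assoc]
  have right : a j * (C.map a).prod * a j = a j * a j * (C.map a).prod := by
    by_cases hm : j - 1 ∈ C
    · obtain ⟨B1, B2, rfl⟩ := List.append_of_mem hm
      have hnm := (List.nodup_middle.1 hndC)
      rw [List.nodup_cons, List.mem_append] at hnm
      have c1 : Commute (a j) (B1.map a).prod := comm_list a j B1 fun y hy =>
        cC y (by simp [hy]) (by rintro rfl; exact hnm.1 (Or.inl hy))
      have c2 : Commute (a j) (B2.map a).prod := comm_list a j B2 fun y hy =>
        cC y (by simp [hy]) (by rintro rfl; exact hnm.1 (Or.inr hy))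
      have hl' := hl (j - 1)
      rw [sub_add_cancel] at hl'
      simp only [List.map_append, List.prod_append, List.map_cons, List.prod_cons]
      generalize (B1.map a).prod = P at *
      generalize (B2.map a).prod = Q at *
      calc a j * (P * (a (j - 1) * Q)) * a j = (a j * P) * a (j - 1) * (Q * a j) := by
            simp only [mul_assoc]
        _ = P * (a j * (a (j - 1) * a j)) * Q := by
            rw [c1.eq, ← c2.eq]; simp only [mul_assoc]
        _ = (P * a j) * a j * a (j - 1) * Q := by rw [← hl']; simp only [mul_assoc]
        _ = a j * (P * a j) * a (j - 1) * Q := by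
            rw [show P * a j * a j = a j * (P * a j) by rw [← mul_assoc, c1.eq]]
        _ = a j * a j * (P * (a (j - 1) * Q)) := by rw [← c1.eq]; simp only [mul_assoc]
    · have c1 : Commute (a j) (C.map a).prod := comm_list a j C fun y hy =>
        cC y hy (by rintro rfl; exact hm hy)
      rw [mul_assoc, ← c1.eq, mul_assoc]
  simp only [List.map_append, List.prod_append, List.map_cons, List.prod_cons]
  generalize (B.map a).prod = P at *
  generalize (C.map a).prod = Q at *
  show a j * (P * (a j * Q)) = P * (a j * Q) * a j
  calc a j * (P * (a j * Q)) = (a j * P * a j) * Q := by simp only [mul_assoc]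
    _ = P * (a j * a j * Q) := by rw [left]; simp only [mul_assoc]
    _ = P * (a j * Q) * a j := by rw [← right]; simp only [mul_assoc]

lemma move (hn : 2 ≤ n)
    (hc : ∀ i j : ZMod n, i - j ≠ 1 → j - i ≠ 1 → a i * a j = a j * a i)
    (hr : ∀ i : ZMod n, a (i + 1) * (a i * a i) = a i * (a (i + 1) * a i))
    (hl : ∀ i : ZMod n, a (i + 1) * (a (i + 1) * a i) = a (i + 1) * (a i * a (i + 1)))
    (I J K : Finset (ZMod n)) (hKJ : K ⊆ J) (hI : I ≠ Finset.univ) (hJ : J ≠ Finset.univ)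
    (hI' : I ∪ K ≠ Finset.univ) (hJ' : (J \ K) ∪ (I ∩ K) ≠ Finset.univ)
    (hup : ∀ i ∈ K, i + 1 ∈ J → i + 1 ∈ K) (hdn : ∀ i, i + 1 ∈ K → i ∈ I → i ∈ K) :
    cycProdDesc a I * cycProdDesc a J
      = cycProdDesc a (I ∪ K) * cycProdDesc a ((J \ K) ∪ (I ∩ K)) := by
  have hK : K ≠ Finset.univ := by
    rintro rfl; exact hJ (Finset.univ_subset_iff.1 hKJ)
  have e1 : cycProdDesc a (I \ K) * cycProdDesc a (I ∩ K) = cycProdDesc a I := by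
    apply cyc_union a hn hc _ _ _ hI <;> grind
  have e2 : cycProdDesc a K * cycProdDesc a (J \ K) = cycProdDesc a J := by
    apply cyc_union a hn hc _ _ _ hJ <;> grind
  have e3 : cycProdDesc a (I \ K) * cycProdDesc a K = cycProdDesc a (I ∪ K) := by
    apply cyc_union a hn hc _ _ _ hI' <;> grind
  have e4 : cycProdDesc a (I ∩ K) * cycProdDesc a (J \ K)
      = cycProdDesc a ((J \ K) ∪ (I ∩ K)) := by
    apply cyc_union a hn hc _ _ _ hJ' <;> grind
  have e5 : Commute (cycProdDesc a (I ∩ K)) (cycProdDesc a K) := by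
    rw [cyc_eq a (I ∩ K)]
    apply Commute.list_prod_left
    intro z hz
    obtain ⟨y, hy, rfl⟩ := List.mem_map.1 hz
    exact central a hn hc hr hl K hK y (Finset.mem_inter.1 ((mem_wd _ _).1 hy)).2
  rw [← e1, ← e2, ← e3, ← e4]
  simp only [mul_assoc]
  rw [← mul_assoc (cycProdDesc a (I ∩ K)), e5.eq, mul_assoc]

end algebra

lemma ne_univ {n : ℕ} [NeZero n] (I : Finset (ZMod n)) (h : I.card < n) : I ≠ Finset.univ := by
  rintro rfl
  simp [ZMod.card] at h

lemma Phi_prod {n : ℕ} [NeZero n] (hn : 2 ≤ n) (I J : Finset (ZMod n))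
    (h : I.card ≤ J.card) (hJ : J.card < n) :
    cycProdDesc (aPl n) I * cycProdDesc (aPl n) J
      = cycProdDesc (aPl n) (Phi (I, J)).1 * cycProdDesc (aPl n) (Phi (I, J)).2 := by
  have hm := mm_spec hn I J h
  refine move (aPl n) hn ?_ ?_ ?_ I J (KK I J) (Finset.filter_subset _ _)
    (ne_univ _ (by omega)) (ne_univ _ hJ)
    (ne_univ (Phi (I, J)).1 (by rw [card1 I J hn h]; omega))
    (ne_univ (Phi (I, J)).2 (by rw [card2 I J hn h]; omega)) ?_ ?_
  · intro i j h1 h2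
    simpa [aPl] using RingQuot.mkAlgHom_rel ℂ (PlRel.comm i j h1 h2)
  · intro i
    simpa [aPl] using RingQuot.mkAlgHom_rel ℂ (PlRel.row i)
  · intro i
    simpa [aPl] using RingQuot.mkAlgHom_rel ℂ (PlRel.col i)
  · intro i hi hj
    simp only [KK, Finset.mem_filter] at *
    refine ⟨hj, ?_⟩
    have := hm i
    rw [add_sub_cancel_right]
    simp only [ind, hi.1, if_true] at this
    split_ifs at this <;> omega
  · intro i hi hiI
    simp only [KK, Finset.mem_filter, add_sub_cancel_right] at *
    have := hm i
    simp only [ind, hiI, if_true] at this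
    by_cases hiJ : i ∈ J
    · refine ⟨hiJ, ?_⟩
      simp only [hiJ, if_true] at this; omega
    · simp only [hiJ, if_false] at this; omega

lemma main_lt (n : ℕ) [NeZero n] (hn : 2 ≤ n) (r s : ℕ) (hrs : r < s) (hs2 : s ≤ n - 1) :
    plE n r * plE n s = plE n s * plE n r := by
  classical
  unfold plE
  rw [Finset.sum_mul_sum, Finset.sum_mul_sum, ← Finset.sum_product', ← Finset.sum_product']
  set S := Finset.powersetCard r (Finset.univ : Finset (ZMod n)) ×ˢ
    Finset.powersetCard s (Finset.univ : Finset (ZMod n)) with hS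
  have hmem : ∀ x ∈ S, x.1.card = r ∧ x.2.card = s := by
    intro x hx; simpa [hS, Finset.mem_powersetCard] using hx
  have hinj : Set.InjOn (Phi (n := n)) S := by
    rintro ⟨I, J⟩ hx ⟨I', J'⟩ hx' he
    have h1 := hmem _ hx
    have h2 := hmem _ hx'
    simp only at h1 h2
    exact Phi_inj hn _ _ _ _ (by omega) (by omega) he
  have himg : S.image Phi = Finset.powersetCard s (Finset.univ : Finset (ZMod n)) ×ˢ
      Finset.powersetCard r (Finset.univ : Finset (ZMod n)) := by
    apply Finset.eq_of_subset_of_card_le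
    · intro y hy
      obtain ⟨⟨I, J⟩, hx, rfl⟩ := Finset.mem_image.1 hy
      have h1 := hmem _ hx
      simp only at h1
      simp only [Finset.mem_product, Finset.mem_powersetCard, Finset.subset_univ, true_and]
      exact ⟨by rw [card1 I J hn (by omega)]; omega, by rw [card2 I J hn (by omega)]; omega⟩
    · rw [Finset.card_image_of_injOn hinj, hS, Finset.card_product, Finset.card_product, mul_comm]
  rw [← himg, Finset.sum_image hinj]
  refine Finset.sum_congr rfl ?_
  rintro ⟨I, J⟩ hx
  have h1 := hmem _ hx
  simp only at h1
  exact Phi_prod hn I J (by omega) (by omega)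

end PlAux

/-- The cyclic noncommutative elementary symmetric polynomials pairwise
commute in the local affine plactic algebra. -/
theorem plactic_esymm_commute (n : ℕ) [NeZero n] (hn : 2 ≤ n) (r s : ℕ)
    (hr1 : 1 ≤ r) (hr2 : r ≤ n - 1) (hs1 : 1 ≤ s) (hs2 : s ≤ n - 1) :
    plE n r * plE n s = plE n s * plE n r := by
  rcases lt_trichotomy r s with h | h | h
  · exact PlAux.main_lt n hn r s h hs2
  · rw [h]
  · exact (PlAux.main_lt n hn s r h hr2).symm
end
end

section
/- Let n ≥ 2, let Pl be the local affine plactic algebra, and let e_r ∈ Pl (0 ≤ r ≤ n−1, with e_0 = 1 and e_r = 0 for r < 0) be the cyclic noncommutative elementary symmetric polynomials. For 1 ≤ r ≤ n−1 define h_r = det(e_{1−i+j})_{1≤i,j≤r}, expanded by the Leibniz formula (unambiguous since the e_r pairwise commute). Then h_r = Σ_p ∏^↻ a_i^{p_i}, the sum over all functions p : ℤ/nℤ → ℕ with Σ_i p_i = r, where ∏^↻ a_i^{p_i} is the product of the blocks a_i^{p_i} over those i with p_i > 0, taken in any order in which the block of a_i stands to the left of the block of a_j whenever j ≡ i+1 (mod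 n) and p_i, p_j > 0 (well-defined since r ≤ n−1 forces p_i = 0 for some i, and blocks with non-adjacent indices commute). -/
noncomputable section

open scoped BigOperators

/-- The cyclically ordered product `∏^↻_i a_i^{p_i}` of blocks, in which the block of `a_i`
stands to the left of the block of `a_{i+1}`: the blocks are multiplied in cyclically
increasing order starting just above a gap of the support of `p`. -/
def cycBlockAsc {n : ℕ} [NeZero n] {A : Type*} [Monoid A] (a : ZMod n → A)
    (p : ZMod n → ℕ) : A :=
  ((List.range n).map fun t =>
    a (zgap (Finset.univ.filter fun i => p i ≠ 0) + 1 + (t : ZMod n)) ^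
      p (zgap (Finset.univ.filter fun i => p i ≠ 0) + 1 + (t : ZMod n))).prod

/-- The `e`'s with the conventions `e_0 = 1`, `e_r = 0` for `r < 0`. -/
def plEInt (n : ℕ) [NeZero n] (t : ℤ) : Pl n :=
  if t < 0 then 0 else if t = 0 then 1 else plE n t.toNat

/-- The determinant of a square matrix over a (possibly noncommutative) ring, expanded via
the Leibniz formula, the factors of each summand multiplied in the order of the columns. -/
def ncDet {A : Type*} [Ring A] {r : ℕ} (M : Fin r → Fin r → A) : A :=
  ∑ σ : Equiv.Perm (Fin r),
    ((Equiv.Perm.sign σ : ℤ) : A) * ((List.finRange r).map fun i => M (σ i) i).prod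

/-- The cyclic noncommutative complete symmetric polynomial
`h_r = det(e_{1-i+j})_{1 ≤ i,j ≤ r}`. -/
def plH (n : ℕ) [NeZero n] (r : ℕ) : Pl n :=
  ncDet fun i j : Fin r => plEInt n ((j : ℤ) - (i : ℤ) + 1)

section Aux

theorem ax_zgap_not_mem {n : ℕ} [NeZero n] (I : Finset (ZMod n)) (g : ZMod n) (hg : g ∉ I) :
    zgap I ∉ I := by
  have h : ((Finset.univ \ I).image ZMod.val).Nonempty :=
    ⟨g.val, Finset.mem_image_of_mem _ (by simp [hg])⟩
  unfold zgap
  rw [dif_pos h]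
  have := Finset.min'_mem _ h
  obtain ⟨x, hx, hx2⟩ := Finset.mem_image.1 this
  rw [← hx2]
  simpa using hx

theorem ax_list_commute {A : Type*} [Monoid A] (l1 l2 : List A)
    (h : ∀ x ∈ l1, ∀ y ∈ l2, Commute x y) : Commute l1.prod l2.prod := by
  apply Commute.list_prod_left
  intro x hx
  exact Commute.list_prod_right _ _ (fun y hy => h x hx y hy)

theorem ax_bind {X Y : Type} (l : List X) (f : X → Y) :
    (do let x ← l; pure (f x)) = l.map f := by
  induction l with
  | nil => rfl
  | cons x l ih => simp_all

theorem ax_rot {n : ℕ} [NeZero n] {A : Type*} [Monoid A] (F : ZMod n → A)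
    (hF : ∀ i j, i - j ≠ 1 → j - i ≠ 1 → Commute (F i) (F j)) (g g' : ZMod n)
    (h1 : F g = 1) (h2 : F g' = 1) :
    ((List.range n).map fun t : ℕ => F (g + 1 + (t : ZMod n))).prod =
    ((List.range n).map fun t : ℕ => F (g' + 1 + (t : ZMod n))).prod := by
  obtain ⟨s, hs, rfl⟩ : ∃ s : ℕ, s < n ∧ g' = g + s :=
    ⟨(g' - g).val, ZMod.val_lt _, by simp⟩
  obtain ⟨d, hd⟩ := Nat.exists_eq_add_of_le hs.le
  have e1 : ((List.range n).map fun t : ℕ => F (g + 1 + (t : ZMod n))) =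
      ((List.range s).map fun t : ℕ => F (g + 1 + (t : ZMod n))) ++
      ((List.range d).map fun t : ℕ => F (g + 1 + s + (t : ZMod n))) := by
    have hl : List.range n = List.range s ++ (List.range d).map (s + ·) := by
      rw [← List.range_add, ← hd]
    rw [hl]
    simp [Function.comp_def, add_assoc]
  have e2 : ((List.range n).map fun t : ℕ => F (g + s + 1 + (t : ZMod n))) =
      ((List.range d).map fun t : ℕ => F (g + 1 + s + (t : ZMod n))) ++
      ((List.range s).map fun t : ℕ => F (g + 1 + (t : ZMod n))) := by
    have hl : List.range n = List.range d ++ (List.range s).map (d + ·) := by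
      rw [← List.range_add, Nat.add_comm, ← hd]
    rw [hl]
    have : (s : ZMod n) + d = 0 := by
      rw [← Nat.cast_add, ← hd]; simp
    rw [List.map_append, List.map_map]
    congr 1
    · apply List.map_congr_left
      intro t _; congr 1; ring
    · apply List.map_congr_left
      intro t _
      simp only [Function.comp]
      congr 1
      push_cast
      linear_combination this
  rw [e1, e2, List.prod_append, List.prod_append]
  apply ax_list_commute
  intro x hx y hy
  simp only [List.mem_map, List.mem_range] at hx hy
  obtain ⟨t, ht, rfl⟩ := hx
  obtain ⟨u, hu, rfl⟩ := hy
  by_cases c1 : (g + 1 + (t : ZMod n)) - (g + 1 + s + u) = 1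
  · have : ((s + u + 1 - t : ℕ) : ZMod n) = 0 := by
      rw [Nat.cast_sub (by omega)]; push_cast; linear_combination -c1
    rw [ZMod.natCast_eq_zero_iff] at this
    have := Nat.le_of_dvd (by omega) this
    have ht0 : t = 0 := by omega
    have hun : s + u + 1 = n := by omega
    have : g + 1 + s + (u : ZMod n) = g := by
      have : ((s + u + 1 : ℕ) : ZMod n) = 0 := by rw [hun]; simp
      push_cast at this
      linear_combination this
    rw [this, h1]
    exact Commute.one_right _
  by_cases c2 : (g + 1 + s + u) - (g + 1 + (t : ZMod n)) = 1
  · have : ((s + u - t - 1 : ℕ) : ZMod n) = 0 := by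
      rw [Nat.cast_sub (by omega), Nat.cast_sub (by omega)]; push_cast; linear_combination c2
    rw [ZMod.natCast_eq_zero_iff] at this
    have : s + u - t - 1 = 0 := Nat.eq_zero_of_dvd_of_lt this (by omega)
    have hts : t + 1 = s := by omega
    have : g + 1 + (t : ZMod n) = g + s := by
      rw [← hts]; push_cast; ring
    rw [this, h2]
    exact Commute.one_left _
  exact hF _ _ c1 c2

variable {n : ℕ} [NeZero n] {A : Type*} [Ring A] (a : ZMod n → A)

theorem ax_desc (ha : ∀ i j, i - j ≠ 1 → j - i ≠ 1 → Commute (a i) (a j))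
    (I : Finset (ZMod n)) (g : ZMod n) (hg : g ∉ I) :
    cycProdDesc a I = ((List.range n).map fun t : ℕ =>
      if g - 1 - (t : ZMod n) ∈ I then a (g - 1 - (t : ZMod n)) else 1).prod := by
  have := ax_rot (fun i : ZMod n => if -i ∈ I then a (-i) else 1) (by
    intro i j h1 h2
    split_ifs
    · exact ha _ _ (fun h => h2 (by linear_combination h)) (fun h => h1 (by linear_combination h))
    · exact Commute.one_right _
    · exact Commute.one_left _
    · exact Commute.one_left _) (-(zgap I)) (-g)
    (by simp [ax_zgap_not_mem I g hg]) (by simp [hg])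
  have e : ∀ g t : ZMod n, -(-g + 1 + t) = g - 1 - t := by intros; ring
  simp only [e] at this
  rw [← this, cycProdDesc, ax_bind, List.map_map]
  rfl

theorem ax_asc (ha : ∀ i j, i - j ≠ 1 → j - i ≠ 1 → Commute (a i) (a j))
    (p : ZMod n → ℕ) (g : ZMod n) (hg : p g = 0) :
    cycBlockAsc a p = ((List.range n).map fun t : ℕ =>
      a (g + 1 + (t : ZMod n)) ^ p (g + 1 + (t : ZMod n))).prod := by
  have hz := ax_zgap_not_mem (Finset.univ.filter fun i => p i ≠ 0) g (by simp [hg])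
  rw [cycBlockAsc, ax_bind, List.map_map]
  exact ax_rot (fun i : ZMod n => a i ^ p i) (by
    intro i j h1 h2
    exact (ha i j h1 h2).pow_pow _ _) _ g
    (by 
      have : p (zgap (Finset.univ.filter fun i => p i ≠ 0)) = 0 := by simpa using hz
      simp [this]) (by simp [hg])

theorem ax_toggle (hn : 2 ≤ n) (ha : ∀ i j, i - j ≠ 1 → j - i ≠ 1 → Commute (a i) (a j))
    (I : Finset (ZMod n)) (p : ZMod n → ℕ) (m : ZMod n) (hm : m ∉ I) (hI : m - 1 ∉ I)
    (hp : p (m - 1) = 0) :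
    cycProdDesc a (insert m I) * cycBlockAsc a p =
      cycProdDesc a I * cycBlockAsc a (p + Pi.single m 1) := by
  obtain ⟨k, rfl⟩ := Nat.exists_eq_add_of_le' hn
  have key : ∀ t : ℕ, 0 < t → t < k + 2 → (t : ZMod (k + 2)) ≠ 0 := by
    intro t h0 h1 h
    rw [ZMod.natCast_eq_zero_iff] at h
    exact absurd (Nat.le_of_dvd h0 h) (by omega)
  have h0 : (k : ZMod (k + 2)) + 2 = 0 := by
    have := ZMod.natCast_self (k + 2)
    push_cast at this; exact this
  have hne : m - 1 ≠ m := by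
    intro h
    apply key 1 (by omega) (by omega)
    push_cast; linear_combination -h
  rw [ax_desc a ha (insert m I) (m - 1) (by simp [hI, hne]), ax_desc a ha I (m - 1) hI,
    ax_asc a ha p (m - 1) hp, ax_asc a ha (p + Pi.single m 1) (m - 1) (by simp [hp, hne])]
  have e1 : m - 1 - 1 - (k : ZMod (k + 2)) = m := by linear_combination -h0
  have e2 : m - 1 - 1 - ((k + 1 : ℕ) : ZMod (k + 2)) = m - 1 := by
    push_cast; linear_combination -h0
  have D : ∀ J : Finset (ZMod (k + 2)), m - 1 ∉ J → ((List.range (k + 2)).map fun t : ℕ =>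
      if m - 1 - 1 - (t : ZMod (k + 2)) ∈ J then a (m - 1 - 1 - (t : ZMod (k + 2))) else 1).prod
      = ((List.range k).map fun t : ℕ =>
      if m - 1 - 1 - (t : ZMod (k + 2)) ∈ J then a (m - 1 - 1 - (t : ZMod (k + 2))) else 1).prod
        * (if m ∈ J then a m else 1) := by
    intro J hJ
    rw [List.range_succ, List.range_succ]
    simp only [List.map_append, List.prod_append, List.map_cons, List.map_nil, e1, e2, if_neg hJ,
      List.prod_cons, List.prod_nil, mul_one]
  have P : ∀ q : ZMod (k + 2) → ℕ, ((List.range (k + 2)).map fun t : ℕ =>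
      a (m - 1 + 1 + (t : ZMod (k + 2))) ^ q (m - 1 + 1 + (t : ZMod (k + 2)))).prod =
      a m ^ q m * ((List.range (k + 1)).map fun t : ℕ =>
      a (m + ((t + 1 : ℕ) : ZMod (k + 2))) ^ q (m + ((t + 1 : ℕ) : ZMod (k + 2)))).prod := by
    intro q
    rw [List.range_succ_eq_map]
    simp [Function.comp_def]
  rw [D _ (by simp [hI, hne]), D _ hI, P, P]
  have X : ((List.range k).map fun t : ℕ =>
      if m - 1 - 1 - (t : ZMod (k + 2)) ∈ insert m I then a (m - 1 - 1 - (t : ZMod (k + 2))) else 1)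
      = ((List.range k).map fun t : ℕ =>
      if m - 1 - 1 - (t : ZMod (k + 2)) ∈ I then a (m - 1 - 1 - (t : ZMod (k + 2))) else 1) := by
    apply List.map_congr_left
    intro t ht
    have : m - 1 - 1 - (t : ZMod (k + 2)) ≠ m := by
      intro h
      apply key (t + 2) (by omega) (by have := List.mem_range.1 ht; omega)
      push_cast; linear_combination -h
    simp [Finset.mem_insert, this]
  have Y : ((List.range (k + 1)).map fun t : ℕ =>
      a (m + ((t + 1 : ℕ) : ZMod (k + 2))) ^
        (p + Pi.single m 1 : ZMod (k + 2) → ℕ) (m + ((t + 1 : ℕ) : ZMod (k + 2)))) =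
      ((List.range (k + 1)).map fun t : ℕ =>
      a (m + ((t + 1 : ℕ) : ZMod (k + 2))) ^ p (m + ((t + 1 : ℕ) : ZMod (k + 2)))) := by
    apply List.map_congr_left
    intro t ht
    have : m + ((t + 1 : ℕ) : ZMod (k + 2)) ≠ m := by
      intro h
      apply key (t + 1) (by omega) (by have := List.mem_range.1 ht; omega)
      linear_combination h
    rw [Pi.add_apply, Pi.single_eq_of_ne this, add_zero]
  rw [X, Y]
  simp only [Finset.mem_insert_self, if_true, if_neg hm, Pi.add_apply, Pi.single_eq_same, mul_one,
    pow_succ', mul_assoc]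

theorem ax_pick_exists (c : ZMod n → ℕ) (h0 : ∑ i, c i ≠ 0) (h1 : ∑ i, c i < n) :
    ∃ m, c m ≠ 0 ∧ c (m - 1) = 0 := by
  by_contra! H
  obtain ⟨z, hz⟩ : ∃ z, c z = 0 := by
    by_contra! h
    have : ∑ i : ZMod n, 1 ≤ ∑ i, c i :=
      Finset.sum_le_sum (fun i _ => Nat.one_le_iff_ne_zero.2 (h i))
    simp [ZMod.card] at this
    omega
  have hall : ∀ t : ℕ, c (z + t) = 0 := by
    intro t
    induction t with
    | zero => simpa using hz
    | succ t ih =>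
      by_contra h
      apply H _ h
      rw [← ih]; congr 1; push_cast; ring
  apply h0
  apply Finset.sum_eq_zero
  intro i _
  have := hall (i - z).val
  simpa using this

open Classical in
def ax_pick (c : ZMod n → ℕ) : ZMod n :=
  if h : ∃ m, c m ≠ 0 ∧ c (m - 1) = 0 then h.choose else 0

theorem ax_pick_spec (c : ZMod n → ℕ) (h0 : ∑ i, c i ≠ 0) (h1 : ∑ i, c i < n) :
    c (ax_pick c) ≠ 0 ∧ c (ax_pick c - 1) = 0 := by
  have h := ax_pick_exists c h0 h1
  unfold ax_pick
  rw [dif_pos h]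
  exact h.choose_spec

def ax_c (x : Finset (ZMod n) × (ZMod n → ℕ)) : ZMod n → ℕ :=
  fun i => (if i ∈ x.1 then 1 else 0) + x.2 i

theorem ax_c_sum (x : Finset (ZMod n) × (ZMod n → ℕ)) :
    ∑ i, ax_c x i = x.1.card + ∑ i, x.2 i := by
  simp [ax_c, Finset.sum_add_distrib]

def ax_phi (m : ZMod n) (x : Finset (ZMod n) × (ZMod n → ℕ)) :
    Finset (ZMod n) × (ZMod n → ℕ) :=
  if m ∈ x.1 then (x.1.erase m, x.2 + Pi.single m 1) else (insert m x.1, x.2 - Pi.single m 1)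

theorem ax_c_phi (m : ZMod n) (x : Finset (ZMod n) × (ZMod n → ℕ)) (h : ax_c x m ≠ 0) :
    ax_c (ax_phi m x) = ax_c x := by
  funext i
  unfold ax_phi
  by_cases hm : m ∈ x.1
  · rw [if_pos hm]
    by_cases hi : i = m
    · subst hi; simp [ax_c, hm, add_comm]
    · simp [ax_c, hi]
  · rw [if_neg hm]
    by_cases hi : i = m
    · subst hi; simp [ax_c, hm] at h ⊢; omega
    · simp [ax_c, hi]

theorem ax_phi_phi (m : ZMod n) (x : Finset (ZMod n) × (ZMod n → ℕ)) (h : ax_c x m ≠ 0) :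
    ax_phi m (ax_phi m x) = x := by
  obtain ⟨I, p⟩ := x
  by_cases hm : m ∈ I
  · simp [ax_phi, hm, Finset.insert_erase hm]
  · simp only [ax_c, hm, if_false, zero_add] at h
    simp only [ax_phi, hm, if_false, Finset.mem_insert_self, if_true, Finset.erase_insert hm]
    congr 1
    funext i
    by_cases hi : i = m
    · subst hi; simp; omega
    · simp [hi]

def ax_w (x : Finset (ZMod n) × (ZMod n → ℕ)) : A :=
  (-1) ^ x.1.card * (cycProdDesc a x.1 * cycBlockAsc a x.2)

theorem ax_w_phi (hn : 2 ≤ n) (ha : ∀ i j, i - j ≠ 1 → j - i ≠ 1 → Commute (a i) (a j))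
    (m : ZMod n) (x : Finset (ZMod n) × (ZMod n → ℕ)) (h : ax_c x m ≠ 0)
    (h' : ax_c x (m - 1) = 0) : ax_w a x + ax_w a (ax_phi m x) = 0 := by
  obtain ⟨I, p⟩ := x
  simp only [ax_c, Nat.add_eq_zero_iff, ite_eq_right_iff, one_ne_zero, imp_false] at h'
  by_cases hm : m ∈ I
  · have := ax_toggle a hn ha (I.erase m) p m (by simp) (by simp [h'.1]) h'.2
    rw [Finset.insert_erase hm] at this
    simp only [ax_w, ax_phi, hm, if_true, this]
    rw [← Finset.card_erase_add_one hm, pow_succ]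
    noncomm_ring
  · simp only [ax_c, hm, if_false, zero_add] at h
    have := ax_toggle a hn ha I (p - Pi.single m 1) m hm h'.1 (by simp [h'.2])
    have e : p - Pi.single m 1 + Pi.single m 1 = p := by
      funext i
      by_cases hi : i = m
      · subst hi; simp; omega
      · simp [hi]
    rw [e] at this
    simp only [ax_w, ax_phi, hm, if_false, this, Finset.card_insert_of_notMem hm]
    rw [pow_succ]
    noncomm_ring

def ax_T (n : ℕ) [NeZero n] (r : ℕ) : Finset (ZMod n → ℕ) :=
  (Fintype.piFinset fun _ : ZMod n => Finset.range (r + 1)).filter (fun p => ∑ i, p i = r)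

theorem ax_mem_T (r : ℕ) (p : ZMod n → ℕ) : p ∈ ax_T n r ↔ ∑ i, p i = r := by
  simp only [ax_T, Finset.mem_filter, Fintype.mem_piFinset, Finset.mem_range,
    and_iff_right_iff_imp]
  intro h i
  have := Finset.single_le_sum (f := p) (fun i _ => Nat.zero_le _) (Finset.mem_univ i)
  omega

def ax_E (k : ℕ) : A := ∑ I ∈ Finset.powersetCard k (Finset.univ : Finset (ZMod n)), cycProdDesc a I
def ax_H (k : ℕ) : A := ∑ p ∈ ax_T n k, cycBlockAsc a p

theorem ax_E_zero : ax_E a 0 = 1 := by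
  simp [ax_E, cycProdDesc]

theorem ax_H_zero : ax_H a 0 = 1 := by
  have : ax_T n 0 = {0} := by
    ext p
    rw [ax_mem_T]
    simp [funext_iff]
  simp [ax_H, cycBlockAsc, this]

theorem ax_EH (hn : 2 ≤ n) (ha : ∀ i j, i - j ≠ 1 → j - i ≠ 1 → Commute (a i) (a j))
    (r : ℕ) (hr1 : 1 ≤ r) (hr2 : r < n) :
    ∑ k ∈ Finset.range (r + 1), (-1) ^ k * (ax_E a k * ax_H a (r - k)) = 0 := by
  let S : Finset (Finset (ZMod n) × (ZMod n → ℕ)) :=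
    (Finset.univ ×ˢ (Fintype.piFinset fun _ : ZMod n => Finset.range (r + 1))).filter
      (fun x => x.1.card + ∑ i, x.2 i = r)
  have hS : ∀ x, x ∈ S ↔ x.1.card + ∑ i, x.2 i = r := by
    intro x
    simp only [S, Finset.mem_filter, Finset.mem_product, Finset.mem_univ, true_and,
      Fintype.mem_piFinset, Finset.mem_range, and_iff_right_iff_imp]
    intro h i
    have := Finset.single_le_sum (f := x.2) (fun i _ => Nat.zero_le _) (Finset.mem_univ i)
    omega
  have h1 : ∑ x ∈ S, ax_w a x = 0 := by
    have sp : ∀ x ∈ S, ax_c x (ax_pick (ax_c x)) ≠ 0 ∧ ax_c x (ax_pick (ax_c x) - 1) = 0 := by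
      intro x hx
      have := (hS x).1 hx
      rw [← ax_c_sum] at this
      exact ax_pick_spec _ (by omega) (by omega)
    refine Finset.sum_involution (fun x _ => ax_phi (ax_pick (ax_c x)) x) ?_ ?_ ?_ ?_
    · intro x hx
      exact ax_w_phi a hn ha _ x (sp x hx).1 (sp x hx).2
    · intro x hx _ h
      have : (ax_phi (ax_pick (ax_c x)) x).1 = x.1 := by rw [h]
      generalize ax_pick (ax_c x) = m at this
      unfold ax_phi at this
      by_cases hm : m ∈ x.1
      · rw [if_pos hm] at this
        have h2 : m ∈ x.1.erase m := by dsimp only at this; rw [this]; exact hm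
        simp at h2
      · rw [if_neg hm] at this
        exact hm (by rw [← this]; exact Finset.mem_insert_self _ _)
    · intro x hx
      rw [hS, ← ax_c_sum, ax_c_phi _ _ (sp x hx).1, ax_c_sum]
      exact (hS x).1 hx
    · intro x hx
      rw [ax_c_phi _ _ (sp x hx).1]
      exact ax_phi_phi _ _ (sp x hx).1
  rw [← h1, ← Finset.sum_fiberwise_of_maps_to (s := S) (t := Finset.range (r + 1))
    (g := fun x => x.1.card)]
  · apply Finset.sum_congr rfl
    intro k hk
    have hk := Finset.mem_range.1 hk
    have : S.filter (fun x => x.1.card = k) =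
        Finset.powersetCard k (Finset.univ : Finset (ZMod n)) ×ˢ ax_T n (r - k) := by
      ext x
      rw [Finset.mem_filter, hS, Finset.mem_product, ax_mem_T, Finset.mem_powersetCard]
      simp only [Finset.subset_univ, true_and]
      omega
    rw [this, ax_E, ax_H, Finset.sum_mul_sum, Finset.sum_product, Finset.mul_sum]
    apply Finset.sum_congr rfl
    intro I hI
    rw [Finset.mul_sum]
    apply Finset.sum_congr rfl
    intro p _
    rw [ax_w, (Finset.mem_powersetCard.1 hI).2]
  · intro x hx
    have := (hS x).1 hx
    simp; omega

theorem ax_H_rec (hn : 2 ≤ n) (ha : ∀ i j, i - j ≠ 1 → j - i ≠ 1 → Commute (a i) (a j))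
    (m : ℕ) (hr2 : m + 1 < n) :
    ax_H a (m + 1) = ∑ j ∈ Finset.range (m + 1), (-1) ^ j * (ax_E a (1 + j) * ax_H a (m - j)) := by
  have := ax_EH a hn ha (m + 1) (by omega) hr2
  rw [Finset.sum_range_succ'] at this
  simp only [pow_zero, one_mul, ax_E_zero, Nat.sub_zero] at this
  rw [add_comm] at this
  rw [eq_neg_of_add_eq_zero_left this, ← Finset.sum_neg_distrib]
  apply Finset.sum_congr rfl
  intro j _
  rw [pow_succ, add_comm 1 j, Nat.add_sub_add_right]
  noncomm_ring

/- Determinant part -/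

theorem ax_ncDet_succ {B : Type*} [Ring B] {m : ℕ} (M : Fin (m + 1) → Fin (m + 1) → B) :
    ncDet M = ∑ i : Fin (m + 1), ∑ e : Equiv.Perm (Fin m),
      ((if i = 0 then 1 else -1 : ℤ) : B) * (((Equiv.Perm.sign e : ℤ) : B) *
        (M i 0 * ((List.finRange m).map fun x => M (Equiv.swap 0 i (e x).succ) x.succ).prod)) := by
  unfold ncDet
  rw [← Fintype.sum_prod_type']
  rw [← Equiv.sum_comp Equiv.Perm.decomposeFin.symm]
  apply Finset.sum_congr rfl
  rintro ⟨i, e⟩ _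
  rw [Equiv.Perm.decomposeFin.symm_sign, List.finRange_succ]
  simp only [List.map_cons, List.map_map, List.prod_cons, Function.comp_def,
    Equiv.Perm.decomposeFin_symm_apply_zero, Equiv.Perm.decomposeFin_symm_apply_succ]
  rw [← mul_assoc ((if i = 0 then 1 else -1 : ℤ) : B)]
  congr 1
  split_ifs <;> simp

def ax_D {B : Type*} [Ring B] (E : ℤ → B) (k m : ℕ) : B :=
  ncDet fun i j : Fin m => if (i : ℕ) = 0 then E (k + (j : ℕ)) else E ((j : ℤ) - (i : ℤ) + 1)

theorem ax_D_zero {B : Type*} [Ring B] (E : ℤ → B) (k : ℕ) : ax_D E k 0 = 1 := by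
  simp [ax_D, ncDet]

theorem ax_D_one {B : Type*} [Ring B] (E : ℤ → B) (k : ℕ) : ax_D E k 1 = E k := by
  simp [ax_D, ncDet]

theorem ax_D_succ {B : Type*} [Ring B] (E : ℤ → B) (h0 : E 0 = 1) (hneg : ∀ t < 0, E t = 0)
    (k m : ℕ) : ax_D E k (m + 2) = E k * ax_D E 1 (m + 1) - ax_D E (k + 1) (m + 1) := by
  conv_lhs => rw [ax_D, ax_ncDet_succ, Fin.sum_univ_succ, Fin.sum_univ_succ]
  rw [Finset.sum_eq_zero (s := (Finset.univ : Finset (Fin m)))]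
  · rw [add_zero, sub_eq_add_neg (E k * _)]
    congr 1
    · unfold ax_D ncDet
      rw [Finset.mul_sum]
      apply Finset.sum_congr rfl
      intro e _
      simp only [if_true, Int.cast_one, one_mul, Equiv.swap_self, Equiv.refl_apply]
      rw [← mul_assoc, ← mul_assoc, (Int.cast_commute _ _).eq]
      congr 1
      · simp
        congr 1
        apply List.map_congr_left
        intro x _
        by_cases hx : e x = 0
        · simp [hx, add_comm]
        · simp [hx]
    · unfold ax_D ncDet
      rw [← Finset.sum_neg_distrib]
      apply Finset.sum_congr rfl
      intro e _
      have : (Fin.succ 0 : Fin (m + 2)) ≠ 0 := Fin.succ_ne_zero _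
      simp only [this, if_false]
      rw [Int.cast_neg, Int.cast_one, neg_one_mul]
      congr 2
      have h1 : ((Fin.succ 0 : Fin (m + 2)) : ℕ) = 1 := by simp
      simp only [h1]
      simp only [one_ne_zero, if_false, Fin.val_zero]
      norm_num [h0]
      congr 1
      apply List.map_congr_left
      intro x _
      by_cases hx : e x = 0
      · simp [hx]; congr 1; ring
      · have h2 : (Equiv.swap 0 1 (e x).succ : Fin (m + 2)) = (e x).succ := by
          apply Equiv.swap_apply_of_ne_of_ne (Fin.succ_ne_zero _)
          intro h
          apply hx
          apply Fin.succ_injective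
          simpa using h
        simp [h2, hx]
  · intro i _
    apply Finset.sum_eq_zero
    intro e _
    have : (i.succ.succ : Fin (m + 2)) ≠ 0 := Fin.succ_ne_zero _
    have h2 : E (((0 : Fin (m + 2)) : ℕ) - ((i.succ.succ : Fin (m + 2)) : ℕ) + 1) = 0 := by
      apply hneg
      simp
      omega
    simp [h2] at *
    simp [h2]

theorem ax_D_rec {B : Type*} [Ring B] (E : ℤ → B) (h0 : E 0 = 1) (hneg : ∀ t < 0, E t = 0)
    (m : ℕ) : ∀ k : ℕ, ax_D E k (m + 1) =
      ∑ j ∈ Finset.range (m + 1), (-1) ^ j * (E (k + j : ℕ) * ax_D E 1 (m - j)) := by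
  induction m with
  | zero => intro k; simp [ax_D_one, ax_D_zero]
  | succ m ih =>
    intro k
    rw [ax_D_succ E h0 hneg, ih (k + 1), Finset.sum_range_succ' _ (m + 1)]
    simp only [pow_zero, one_mul, Nat.sub_zero, add_zero]
    rw [add_comm (Finset.sum _ _), sub_eq_add_neg, ← Finset.sum_neg_distrib]
    congr 1
    apply Finset.sum_congr rfl
    intro j _
    rw [pow_succ, Nat.add_sub_add_right, Nat.add_assoc k 1 j, Nat.add_comm 1 j]
    noncomm_ring

theorem ax_plH_eq (n : ℕ) [NeZero n] (r : ℕ) : plH n r = ax_D (plEInt n) 1 r := by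
  unfold plH ax_D
  congr 1
  funext i j
  split_ifs with h
  · rw [h]; congr 1; push_cast; ring
  · rfl

theorem ax_aPl_comm (n : ℕ) (i j : ZMod n) (h1 : i - j ≠ 1) (h2 : j - i ≠ 1) :
    Commute (aPl n i) (aPl n j) := by
  unfold Commute SemiconjBy aPl
  rw [← map_mul, ← map_mul]
  exact RingQuot.mkAlgHom_rel ℂ (PlRel.comm i j h1 h2)

theorem ax_main (n : ℕ) [NeZero n] (hn : 2 ≤ n) (r : ℕ) :
    r < n → plH n r = ax_H (aPl n) r := by
  induction r using Nat.strong_induction_on with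
  | _ r ih =>
    intro hr
    rcases r with _ | m
    · rw [ax_plH_eq, ax_D_zero, ax_H_zero]
    · rw [ax_H_rec (aPl n) hn (ax_aPl_comm n) m hr, ax_plH_eq, ax_D_rec]
      · apply Finset.sum_congr rfl
        intro j _
        rw [← ax_plH_eq, ih (m - j) (by omega) (by omega)]
        congr 2
        have h1 : ¬ (((1 + j : ℕ) : ℤ) < 0) := by omega
        have h2 : ¬ (((1 + j : ℕ) : ℤ) = 0) := by omega
        rw [plEInt, if_neg h1, if_neg h2, Int.toNat_natCast]
        rfl
      · simp [plEInt]
      · intro t ht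
        simp [plEInt, ht]

end Aux

/-- For `1 ≤ r ≤ n-1`, the cyclic noncommutative complete symmetric
polynomial `h_r` equals the sum, over all `p : ℤ/nℤ → ℕ` with `Σ_i p_i = r`, of the
cyclically ordered products `∏^↻ a_i^{p_i}`. -/
theorem plactic_hsymm_formula (n : ℕ) [NeZero n] (hn : 2 ≤ n) (r : ℕ)
    (hr1 : 1 ≤ r) (hr2 : r ≤ n - 1) :
    plH n r =
      ∑ p ∈ (Fintype.piFinset fun _ : ZMod n => Finset.range (r + 1)).filter
          (fun p => ∑ i, p i = r),
        cycBlockAsc (aPl n) p := by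
  exact ax_main n hn r (by omega)
end
end

section
/- Let n, k ≥ 1 and z ∈ ℂ, and let x = (x_1,…,x_k) ∈ ℂ^k have nonzero, pairwise distinct entries and satisfy x_i^{n+k} = (−1)^{k−1} z·(x_1⋯x_k) for every i = 1,…,k. Then for every integer r with 0 ≤ r ≤ n one has h_{n−r}(x_1,…,x_k) = z·h_r(x_1^{−1},…,x_k^{−1}). -/
noncomputable section

open scoped BigOperators

/-- Elementary symmetric polynomial `e_r(x)` of a tuple of complex numbers,
with `e_0 = 1` and `e_r = 0` for `r < 0` or `r > m`. -/
def eC {m : ℕ} (x : Fin m → ℂ) (r : ℤ) : ℂ :=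
  if 0 ≤ r then ∑ I ∈ Finset.powersetCard r.toNat (Finset.univ : Finset (Fin m)), ∏ i ∈ I, x i
  else 0

/-- Complete homogeneous symmetric polynomial `h_r(x)` of a tuple of complex numbers,
with `h_0 = 1` and `h_r = 0` for `r < 0`. -/
def hC {m : ℕ} (x : Fin m → ℂ) (r : ℤ) : ℂ :=
  if 0 ≤ r then
    ∑ p ∈ (Fintype.piFinset fun _ : Fin m => Finset.range (r.toNat + 1)).filter
        (fun p => ∑ i, p i = r.toNat),
      ∏ i, x i ^ p i
  else 0

open PowerSeries in
lemma hC_aux_coeff {k : ℕ} (x : Fin k → ℂ) (m : ℕ) :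
    hC x (m : ℤ) = PowerSeries.coeff m (∏ i, PowerSeries.mk (fun a => x i ^ a)) := by
  classical
  rw [PowerSeries.coeff_prod]
  simp only [hC, Int.natCast_nonneg, if_true, Int.toNat_natCast, PowerSeries.coeff_mk]
  refine Finset.sum_bij' (fun p _ => Finsupp.equivFunOnFinite.symm p) (fun f _ => (f : Fin k → ℕ))
    ?_ ?_ ?_ ?_ ?_
  · intro p hp
    simp only [Finset.mem_filter] at hp
    simp [Finset.mem_finsuppAntidiag, hp.2]
  · intro f hf
    simp only [Finset.mem_finsuppAntidiag] at hf
    simp only [Finset.mem_filter, Fintype.mem_piFinset, Finset.mem_range]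
    refine ⟨fun i => ?_, hf.1⟩
    have := Finset.single_le_sum (f := fun i => f i) (fun i _ => Nat.zero_le _) (Finset.mem_univ i)
    have h2 : ∑ i, f i = m := hf.1
    omega
  · intro p hp
    rfl
  · intro f hf
    ext i
    rfl
  · intro p hp
    rfl

def cC {k : ℕ} (x : Fin k → ℂ) (i : Fin k) : ℂ :=
  ∏ j ∈ Finset.univ.erase i, (1 - x j / x i)⁻¹

lemma hC_aux_pf {k : ℕ} (hk : 1 ≤ k) (x : Fin k → ℂ) (hx0 : ∀ i, x i ≠ 0)
    (hxd : Function.Injective x) :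
    (1 : Polynomial ℂ) = ∑ i, Polynomial.C (cC x i) *
      ∏ j ∈ Finset.univ.erase i, (1 - Polynomial.C (x j) * Polynomial.X) := by
  haveI : Nonempty (Fin k) := ⟨⟨0, hk⟩⟩
  have hinj : Function.Injective (fun i => (x i)⁻¹) := fun a b h => hxd (inv_injective h)
  refine (Lagrange.sum_basis (s := Finset.univ) (v := fun i => (x i)⁻¹) hinj.injOn
    Finset.univ_nonempty).symm.trans ?_
  refine Finset.sum_congr rfl fun i _ => ?_
  rw [Lagrange.basis, cC, map_prod, ← Finset.prod_mul_distrib]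
  refine Finset.prod_congr rfl fun j hj => ?_
  have hne : x i ≠ x j := fun h => (Finset.ne_of_mem_erase hj) (hxd h).symm
  have hi := hx0 i
  have hj := hx0 j
  have h1 : x i - x j ≠ 0 := sub_ne_zero.2 hne
  have h2 : x j - x i ≠ 0 := sub_ne_zero.2 hne.symm
  have e1 : ((x i)⁻¹ - (x j)⁻¹)⁻¹ = - ((1 - x j / x i)⁻¹ * x j) := by
    have : (x i)⁻¹ - (x j)⁻¹ = (x j - x i) / (x i * x j) := by field_simp
    rw [this]
    have : 1 - x j / x i = (x i - x j) / x i := by field_simp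
    rw [this, inv_div, inv_div]
    field_simp
    ring
  have e2 : Polynomial.C (x j) * Polynomial.C ((x j)⁻¹) = 1 := by
    rw [← Polynomial.C_mul, mul_inv_cancel₀ hj, Polynomial.C_1]
  rw [Lagrange.basisDivisor, e1, Polynomial.C_neg, Polynomial.C_mul]
  linear_combination Polynomial.C (1 - x j / x i)⁻¹ * e2

lemma hC_aux_geom (a : ℂ) :
    PowerSeries.mk (fun m => a ^ m) * (1 - PowerSeries.C a * PowerSeries.X) = 1 := by
  ext m
  rw [mul_sub, mul_one, ← mul_assoc, map_sub]
  cases m with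
  | zero => simp
  | succ m =>
    rw [PowerSeries.coeff_succ_mul_X, PowerSeries.coeff_mul_C]
    simp [PowerSeries.coeff_one, pow_succ]

lemma hC_formula {k : ℕ} (hk : 1 ≤ k) (x : Fin k → ℂ) (hx0 : ∀ i, x i ≠ 0)
    (hxd : Function.Injective x) (m : ℕ) :
    hC x (m : ℤ) = ∑ i, cC x i * x i ^ m := by
  have h := congrArg (fun p : Polynomial ℂ => (Polynomial.coeToPowerSeries.ringHom p))
    (hC_aux_pf hk x hx0 hxd)
  simp only [map_one, map_sum, map_mul, map_prod, map_sub,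
    Polynomial.coeToPowerSeries.ringHom_apply, Polynomial.coe_C, Polynomial.coe_X] at h
  have h2 : (∏ i, PowerSeries.mk (fun a => x i ^ a)) =
      ∑ i, PowerSeries.C (cC x i) * PowerSeries.mk (fun a => x i ^ a) := by
    rw [← mul_one (∏ i, PowerSeries.mk (fun a => x i ^ a)), h, Finset.mul_sum]
    refine Finset.sum_congr rfl fun i _ => ?_
    rw [← Finset.mul_prod_erase Finset.univ _ (Finset.mem_univ i)]
    have h3 : (∏ j ∈ Finset.univ.erase i, PowerSeries.mk (fun a => x j ^ a)) *
        (∏ j ∈ Finset.univ.erase i, (1 - PowerSeries.C (x j) * PowerSeries.X)) = 1 := by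
      rw [← Finset.prod_mul_distrib]
      exact Finset.prod_eq_one fun j _ => hC_aux_geom (x j)
    linear_combination (PowerSeries.C (cC x i) * PowerSeries.mk (fun a => x i ^ a)) * h3
  rw [hC_aux_coeff, h2, map_sum]
  simp

lemma cC_inv {k : ℕ} (x : Fin k → ℂ) (hx0 : ∀ i, x i ≠ 0)
    (hxd : Function.Injective x) (i : Fin k) :
    cC (fun i => (x i)⁻¹) i * x i ^ k = cC x i * ((-1) ^ (k - 1) * ∏ j, x j) := by
  have hc : (Finset.univ.erase i).card = k - 1 := by simp
  have hk : k = (k - 1) + 1 := by have := i.2; omega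
  rw [← Finset.mul_prod_erase Finset.univ _ (Finset.mem_univ i)]
  have key : cC (fun i => (x i)⁻¹) i * x i ^ (k - 1) =
      cC x i * ((-1) ^ (k - 1) * ∏ j ∈ Finset.univ.erase i, x j) := by
    rw [← hc, ← Finset.prod_const, ← Finset.prod_const, cC, cC, ← Finset.prod_mul_distrib,
      ← Finset.prod_mul_distrib, ← Finset.prod_mul_distrib]
    refine Finset.prod_congr rfl fun j hj => ?_
    have hne : x i ≠ x j := fun h => (Finset.ne_of_mem_erase hj) (hxd h).symm
    have hi := hx0 i
    have hj := hx0 j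
    have h1 : x i - x j ≠ 0 := sub_ne_zero.2 hne
    have h2 : x j - x i ≠ 0 := sub_ne_zero.2 hne.symm
    have a1 : 1 - x j / x i = (x i - x j) / x i := by field_simp
    have a2 : 1 - (x j)⁻¹ / (x i)⁻¹ = (x j - x i) / x j := by field_simp
    rw [a1, a2, inv_div, inv_div]
    field_simp
    ring
  have : x i ^ k = x i ^ (k - 1) * x i := by rw [← pow_succ, ← hk]
  rw [this]
  linear_combination x i * key

/-- If the nonzero, pairwise distinct complex numbers `x_1, …, x_k` satisfy the
Bethe Ansatz equations `x_i^{n+k} = (-1)^{k-1} z e_k(x)`, then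
`h_{n-r}(x) = z ⬝ h_r(x⁻¹)` for all `0 ≤ r ≤ n`. -/
theorem hsymm_duality_of_bethe (n k : ℕ) (hn : 1 ≤ n) (hk : 1 ≤ k) (z : ℂ)
    (x : Fin k → ℂ) (hx0 : ∀ i, x i ≠ 0) (hxd : Function.Injective x)
    (hbae : ∀ i, x i ^ (n + k) = (-1) ^ (k - 1) * z * ∏ j, x j)
    (r : ℕ) (hr : r ≤ n) :
    hC x ((n : ℤ) - (r : ℤ)) = z * hC (fun i => (x i)⁻¹) (r : ℤ) := by
  have hinj : Function.Injective (fun i => (x i)⁻¹) := fun a b h => hxd (inv_injective h)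
  rw [← Nat.cast_sub hr, hC_formula hk x hx0 hxd,
    hC_formula hk _ (fun i => inv_ne_zero (hx0 i)) hinj, Finset.mul_sum]
  refine Finset.sum_congr rfl fun i _ => ?_
  have h1 := cC_inv x hx0 hxd i
  have h2 := hbae i
  have hi := hx0 i
  have h3 : x i ^ (n + k) = x i ^ (n - r) * x i ^ r * x i ^ k := by
    rw [← pow_add, ← pow_add]
    congr 1
    omega
  have hrk : x i ^ r * x i ^ k ≠ 0 := mul_ne_zero (pow_ne_zero _ hi) (pow_ne_zero _ hi)
  have h4 : (x i)⁻¹ ^ r * x i ^ r = 1 := by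
    rw [← mul_pow, inv_mul_cancel₀ hi, one_pow]
  apply mul_right_cancel₀ hrk
  rw [h3] at h2
  linear_combination cC x i * h2 - z * h1 - z * cC (fun i => (x i)⁻¹) i * x i ^ k * h4
end
end

section
/- Let n, k ≥ 1 with n + k > 2, let z ∈ ℂ∖{0}, and fix t ∈ ℂ with t^n = z. For σ ∈ 𝔓_{≤n−1,k} define x_σ ∈ ℂ^k by (x_σ)_j = t·ζ^{|σ|/n + I^{(k)}(σ^t)_j} for j = 1,…,k. Then: (i) the entries of x_σ are nonzero and pairwise distinct and x_σ satisfies the Bethe Ansatz equations x_i^{n+k} = (−1)^{k−1} z·(x_1⋯x_k) for all i; (ii) the assignment σ ↦ (orbit of x_σ under permutation of coordinates) is a bijection from 𝔓_{≤n−1,k} onto the set of orbits, under the permutation action of the symmetric group S_k on ℂ^k, of the solutions of the Bethe Ansatz equations with nonzero, pairwise distinct entries; (iii) multiplication of all coordinates by e^{2πi/n} maps this solution set to itself. -/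
noncomputable section

open scoped BigOperators

/-- `𝔓_{≤r,c}`: partitions with at most `r` parts, each part at most `c`,
encoded as weakly decreasing functions `Fin r → Fin (c+1)`. -/
abbrev PartBox (r c : ℕ) :=
  {f : Fin r → Fin (c + 1) // ∀ i j : Fin r, i ≤ j → (f j : ℕ) ≤ (f i : ℕ)}

/-- The parts of a partition, as natural numbers. -/
def partVal {r c : ℕ} (σ : PartBox r c) (i : Fin r) : ℕ := (σ.1 i : ℕ)

/-- `|σ|`, the number of boxes of the partition. -/
def partSum {r c : ℕ} (σ : PartBox r c) : ℕ := ∑ i, partVal σ i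

/-- The transpose (conjugate) partition of `μ`, with `c` parts: `μ^t_j = #{i | μ_i ≥ j}`
(here `j` is the 0-based index, so this computes `μ^t_{j+1}`). -/
def transpGen {r : ℕ} (μ : Fin r → ℕ) (c : ℕ) : Fin c → ℕ :=
  fun j => (Finset.univ.filter fun i : Fin r => (j : ℕ) + 1 ≤ μ i).card

/-- `I^{(m)}(τ)_j = (m+1)/2 + τ_{m+1-j} - (m+1-j)` (1-based `j`), as a rational number. -/
def Imap (m : ℕ) (τ : Fin m → ℕ) (j : Fin m) : ℚ :=
  ((m : ℚ) + 1) / 2 + (τ j.rev : ℚ) - ((m : ℚ) - (j : ℚ))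

/-- `ζ^t = exp(2πι t/N)` for rational exponents `t`. -/
def zeta (N : ℕ) (t : ℚ) : ℂ :=
  Complex.exp (2 * Real.pi * Complex.I * (t : ℂ) / (N : ℂ))

/-- The set of solutions of the Bethe Ansatz equations having nonzero,
pairwise distinct entries. -/
def BAESol (n k : ℕ) (z : ℂ) : Set (Fin k → ℂ) :=
  {x | (∀ i, x i ≠ 0) ∧ Function.Injective x ∧
    ∀ i, x i ^ (n + k) = (-1) ^ (k - 1) * z * ∏ j, x j}

/-- The Bethe root `x_σ` attached to a partition `σ ∈ 𝔓_{≤ n-1,k}`: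
`(x_σ)_j = t · ζ^{|σ|/n + I^{(k)}(σ^t)_j}` where `t^n = z`. -/
def betheRoot (n k : ℕ) (t : ℂ) (σ : PartBox (n - 1) k) (j : Fin k) : ℂ :=
  t * zeta (n + k) ((partSum σ : ℚ) / (n : ℚ) + Imap k (transpGen (partVal σ) k) j)

def EE (N : ℕ) (x : ℂ) : ℂ := Complex.exp (2 * Real.pi * Complex.I * x / (N : ℂ))

lemma EE_ne (N : ℕ) (x : ℂ) : EE N x ≠ 0 := Complex.exp_ne_zero _

lemma EE_add (N : ℕ) (x y : ℂ) : EE N (x + y) = EE N x * EE N y := by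
  unfold EE
  rw [← Complex.exp_add]
  congr 1
  ring

lemma EE_pow (N : ℕ) (x : ℂ) (m : ℕ) : EE N x ^ m = EE N (m * x) := by
  unfold EE
  rw [← Complex.exp_nat_mul]
  congr 1
  ring

lemma EE_sum (N : ℕ) {k : ℕ} (f : Fin k → ℂ) : ∏ j, EE N (f j) = EE N (∑ j, f j) := by
  unfold EE
  rw [← Complex.exp_sum, Finset.mul_sum, Finset.sum_div]

lemma EE_eq_iff {N : ℕ} (hN : 0 < N) (x y : ℂ) :
    EE N x = EE N y ↔ ∃ m : ℤ, x = y + m * N := by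
  have h0 : (N : ℂ) ≠ 0 := by exact_mod_cast hN.ne'
  have hp : (2 * Real.pi * Complex.I : ℂ) ≠ 0 := Complex.two_pi_I_ne_zero
  unfold EE
  rw [Complex.exp_eq_exp_iff_exists_int]
  refine exists_congr fun m => ?_
  constructor
  · intro h
    have h2 : (2 * Real.pi * Complex.I : ℂ) * x = (2 * Real.pi * Complex.I) * (y + m * N) := by
      field_simp at h
      linear_combination (2 * Real.pi * Complex.I : ℂ) * h
    exact mul_left_cancel₀ hp h2
  · intro h
    rw [h]
    field_simp

lemma EE_neg_one {N : ℕ} (hN : 0 < N) {k : ℕ} (hk : 1 ≤ k) :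
    ((-1 : ℂ)) ^ (k - 1) = EE N (N * ((k : ℂ) - 1) / 2) := by
  have h0 : (N : ℂ) ≠ 0 := by exact_mod_cast hN.ne'
  have : (-1 : ℂ) = EE N (N / 2) := by
    unfold EE
    rw [← Complex.exp_pi_mul_I]
    congr 1
    field_simp
  rw [this, EE_pow]
  push_cast [hk]
  congr 1
  ring

lemma EE_surj {N : ℕ} (hN : 0 < N) {w : ℂ} (hw : w ≠ 0) : ∃ s, w = EE N s := by
  have h0 : (N : ℂ) ≠ 0 := by exact_mod_cast hN.ne'
  have hp : (2 * Real.pi * Complex.I : ℂ) ≠ 0 := Complex.two_pi_I_ne_zero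
  refine ⟨Complex.log w * N / (2 * Real.pi * Complex.I), ?_⟩
  unfold EE
  rw [show (2 * Real.pi * Complex.I * (Complex.log w * N / (2 * Real.pi * Complex.I)) / (N : ℂ))
    = Complex.log w by field_simp]
  exact (Complex.exp_log hw).symm

lemma transp_anti {r : ℕ} (μ : Fin r → ℕ) (c : ℕ) (i j : Fin c) (h : i ≤ j) :
    transpGen μ c j ≤ transpGen μ c i := by
  unfold transpGen
  apply Finset.card_le_card
  intro x
  simp only [Finset.mem_filter, Finset.mem_univ, true_and]
  have : (i : ℕ) ≤ j := h
  omega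

lemma transp_le {r : ℕ} (μ : Fin r → ℕ) (c : ℕ) (j : Fin c) : transpGen μ c j ≤ r := by
  unfold transpGen
  exact (Finset.card_le_univ _).trans (by simp)

lemma card_fin_lt (c m : ℕ) (h : m ≤ c) :
    (Finset.univ.filter fun i : Fin c => (i : ℕ) + 1 ≤ m).card = m := by
  have : ((Finset.univ.filter fun i : Fin c => (i : ℕ) + 1 ≤ m).map Fin.valEmbedding)
      = Finset.range m := by
    ext x
    simp only [Finset.mem_map, Finset.mem_filter, Finset.mem_univ, true_and,
      Fin.valEmbedding_apply, Finset.mem_range]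
    constructor
    · rintro ⟨a, h1, rfl⟩
      omega
    · intro hx
      exact ⟨⟨x, by omega⟩, by simpa using hx, rfl⟩
  rw [← Finset.card_map Fin.valEmbedding, this, Finset.card_range]

lemma transp_le_iff {r : ℕ} (μ : Fin r → ℕ) (hμ : ∀ i j, i ≤ j → μ j ≤ μ i) (c : ℕ)
    (j : Fin c) (i : Fin r) : (i : ℕ) + 1 ≤ transpGen μ c j ↔ (j : ℕ) + 1 ≤ μ i := by
  unfold transpGen
  constructor
  · intro h
    by_contra hc
    have hsub : (Finset.univ.filter fun i : Fin r => (j : ℕ) + 1 ≤ μ i) ⊆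
        (Finset.univ.filter fun l : Fin r => (l : ℕ) + 1 ≤ (i : ℕ)) := by
      intro x
      simp only [Finset.mem_filter, Finset.mem_univ, true_and]
      intro hx
      by_contra hlt
      have : i ≤ x := by
        rw [Fin.le_def]; omega
      have := hμ i x this
      omega
    have := Finset.card_le_card hsub
    rw [card_fin_lt r i i.2.le] at this
    omega
  · intro h
    have hsub : (Finset.univ.filter fun l : Fin r => (l : ℕ) + 1 ≤ (i : ℕ) + 1) ⊆
        (Finset.univ.filter fun i : Fin r => (j : ℕ) + 1 ≤ μ i) := by
      intro x
      simp only [Finset.mem_filter, Finset.mem_univ, true_and]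
      intro hx
      have : x ≤ i := by
        rw [Fin.le_def]; omega
      have := hμ x i this
      omega
    have := Finset.card_le_card hsub
    rw [card_fin_lt r (i + 1) i.2] at this
    omega

lemma transp_transp {r : ℕ} (μ : Fin r → ℕ) (hμ : ∀ i j, i ≤ j → μ j ≤ μ i) (c : ℕ)
    (hc : ∀ i, μ i ≤ c) : transpGen (transpGen μ c) r = μ := by
  funext i
  have : transpGen (transpGen μ c) r i
      = (Finset.univ.filter fun j : Fin c => (j : ℕ) + 1 ≤ μ i).card := by
    conv_lhs => unfold transpGen
    congr 1
    ext j
    simp only [Finset.mem_filter, Finset.mem_univ, true_and]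
    exact transp_le_iff μ hμ c j i
  rw [this, card_fin_lt c _ (hc i)]

lemma transp_sum {r : ℕ} (μ : Fin r → ℕ) (c : ℕ) (hc : ∀ i, μ i ≤ c) :
    ∑ j, transpGen μ c j = ∑ i, μ i := by
  unfold transpGen
  simp only [Finset.card_filter]
  rw [Finset.sum_comm]
  refine Finset.sum_congr rfl fun i _ => ?_
  rw [← Finset.card_filter, card_fin_lt c _ (hc i)]

def aa {r k : ℕ} (σ : PartBox r k) (j : Fin k) : ℕ := j + transpGen (partVal σ) k j.rev

lemma partVal_le {r k : ℕ} (σ : PartBox r k) (i : Fin r) : partVal σ i ≤ k := by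
  unfold partVal
  have := (σ.1 i).2
  omega

lemma aa_mono {r k : ℕ} (σ : PartBox r k) : StrictMono (aa σ) := by
  intro i j h
  unfold aa
  have := transp_anti (partVal σ) k j.rev i.rev (Fin.rev_le_rev.2 h.le)
  have : (i : ℕ) < j := h
  omega

lemma aa_lt {r k : ℕ} (σ : PartBox r k) (j : Fin k) : aa σ j < r + k := by
  unfold aa
  have := transp_le (partVal σ) k j.rev
  omega

lemma fin_sum2 (k : ℕ) : (∑ j : Fin k, (j : ℂ)) = k * (k - 1) / 2 := by
  induction k with
  | zero => simp
  | succ k ih =>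
    rw [Fin.sum_univ_castSucc]
    simp only [Fin.val_castSucc, Fin.val_last]
    rw [ih]
    push_cast
    ring

lemma aa_sum {r k : ℕ} (σ : PartBox r k) :
    (∑ j, (aa σ j : ℂ)) = partSum σ + k * (k - 1) / 2 := by
  unfold aa
  push_cast
  rw [Finset.sum_add_distrib, fin_sum2]
  have h1 : ∑ j : Fin k, (transpGen (partVal σ) k j.rev : ℂ)
      = ∑ j : Fin k, (transpGen (partVal σ) k j : ℂ) :=
    Equiv.sum_comp Fin.revPerm (fun j => (transpGen (partVal σ) k j : ℂ))
  rw [h1]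
  have h2 := transp_sum (partVal σ) k (partVal_le σ)
  unfold partSum
  rw [← h2]
  push_cast
  ring

lemma aa_inj {r k : ℕ} (σ τ : PartBox r k) (h : aa σ = aa τ) : σ = τ := by
  have h1 : transpGen (partVal σ) k = transpGen (partVal τ) k := by
    funext j
    have := congrFun h j.rev
    unfold aa at this
    simpa using this
  have h2 : partVal σ = partVal τ := by
    rw [← transp_transp (partVal σ) σ.2 k (partVal_le σ),
      ← transp_transp (partVal τ) τ.2 k (partVal_le τ), h1]
  apply Subtype.ext
  funext i
  exact Fin.ext (congrFun h2 i)

lemma sm_aux {k : ℕ} (a : Fin k → ℕ) (ha : StrictMono a) (i j : Fin k) (h : i ≤ j) :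
    a i + (j - i : ℕ) ≤ a j := by
  have key : ∀ d : ℕ, ∀ hd : (i : ℕ) + d < k, a i + d ≤ a ⟨i + d, hd⟩ := by
    intro d
    induction d with
    | zero => intro hd; simp
    | succ d ih =>
      intro hd
      have h1 := ih (by omega)
      have h2 : a ⟨i + d, by omega⟩ < a ⟨i + (d + 1), hd⟩ := ha (by
        rw [Fin.lt_def]; simp)
      omega
  have hij : (i : ℕ) ≤ j := h
  have := key (j - i) (by omega)
  have e : (⟨i + (j - i), by omega⟩ : Fin k) = j := Fin.ext (by simp; omega)
  rwa [e] at this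

lemma aa_surj {r k : ℕ} (a : Fin k → ℕ) (ha : StrictMono a) (hl : ∀ j, a j < r + k) :
    ∃ σ : PartBox r k, aa σ = a := by
  have hge : ∀ j : Fin k, (j : ℕ) ≤ a j := by
    intro j
    have := sm_aux a ha ⟨0, j.pos⟩ j (by rw [Fin.le_def]; simp)
    simp at this
    omega
  set ν : Fin k → ℕ := fun j => a j.rev - (j.rev : ℕ) with hν
  have hanti : ∀ i j, i ≤ j → ν j ≤ ν i := by
    intro i j h
    have h1 := sm_aux a ha j.rev i.rev (Fin.rev_le_rev.2 h)
    have h2 : (j.rev : ℕ) ≤ i.rev := Fin.rev_le_rev.2 h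
    have := hge j.rev
    simp only [hν]
    omega
  have hle : ∀ j, ν j ≤ r := by
    intro j
    have h1 := sm_aux a ha j.rev ⟨k - 1, Nat.sub_lt j.pos one_pos⟩ (by rw [Fin.le_def]; simp; omega)
    have h2 := hl ⟨k - 1, Nat.sub_lt j.pos one_pos⟩
    simp only [hν]
    simp only at h1
    have := j.rev.2
    omega
  refine ⟨⟨fun i => ⟨transpGen ν r i, Nat.lt_succ_of_le (transp_le ν r i)⟩,
    fun i j h => transp_anti ν r i j h⟩, ?_⟩
  funext j
  have : partVal (⟨fun i => ⟨transpGen ν r i, Nat.lt_succ_of_le (transp_le ν r i)⟩,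
    fun i j h => transp_anti ν r i j h⟩ : PartBox r k) = transpGen ν r := rfl
  unfold aa
  rw [this, transp_transp ν hanti r hle]
  have := hge j
  simp only [hν, Fin.rev_rev]
  omega

lemma hermite (N : ℕ) (hN : 0 < N) (M : ℕ) : ∑ c ∈ Finset.range N, (c + M) / N = M := by
  induction M with
  | zero =>
    apply Finset.sum_eq_zero
    intro c hc
    exact Nat.div_eq_of_lt (Finset.mem_range.1 hc)
  | succ M ih =>
    have h1 := Finset.sum_range_succ (fun c => (c + M) / N) N
    have h2 := Finset.sum_range_succ' (fun c => (c + M) / N) N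
    have h3 : (N + M) / N = M / N + 1 := by
      rw [Nat.add_div_left _ hN]
    have h4 : ∑ c ∈ Finset.range N, (c + (M + 1)) / N
        = ∑ c ∈ Finset.range N, (c + 1 + M) / N := by
      refine Finset.sum_congr rfl fun c _ => ?_
      congr 1
      ring
    rw [h4]
    simp only [zero_add] at h2
    omega

lemma rot_nonpos {N k : ℕ} (hN : 0 < N) (a b : Fin k → ℕ) (ha : Function.Injective a)
    (hal : ∀ j, a j < N - 1) (hbl : ∀ j, b j < N - 1) (m : Fin k → ℤ) (M : ℤ)
    (hM : ∑ j, m j = M) (h : ∀ j, (b j : ℤ) = a j + M - m j * N) : M ≤ 0 := by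
  by_contra hc
  push Not at hc
  obtain ⟨P, rfl⟩ := Int.eq_ofNat_of_zero_le hc.le
  have hm : ∀ j, m j = (((a j + P) / N : ℕ) : ℤ) := by
    intro j
    have h1 := h j
    have h2 := hbl j
    push_cast
    symm
    rw [Int.ediv_eq_iff_of_pos (by exact_mod_cast hN)]
    constructor
    · linarith [Int.natCast_nonneg (b j)]
    · have : (b j : ℤ) < N := by omega
      linarith
  have hs : ∑ j, (a j + P) / N = P := by
    have : ((∑ j, (a j + P) / N : ℕ) : ℤ) = P := by
      rw [← hM, Nat.cast_sum]
      exact Finset.sum_congr rfl fun j _ => (hm j).symm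
    exact_mod_cast this
  have hs2 : ∑ c ∈ Finset.univ.image a, (c + P) / N = P := by
    rw [Finset.sum_image (fun x _ y _ hxy => ha hxy), hs]
  have hnot : (N - 1) ∉ Finset.univ.image a := by
    simp only [Finset.mem_image, Finset.mem_univ, true_and, not_exists]
    intro j hj
    have := hal j
    omega
  have hsub : insert (N - 1) (Finset.univ.image a) ⊆ Finset.range N := by
    intro c
    simp only [Finset.mem_insert, Finset.mem_image, Finset.mem_univ, true_and, Finset.mem_range]
    rintro (rfl | ⟨j, rfl⟩)
    · omega
    · have := hal j
      omega
  have hle := Finset.sum_le_sum_of_subset (f := fun c => (c + P) / N) hsub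
  rw [Finset.sum_insert hnot, hs2, hermite N hN P] at hle
  have : 1 ≤ (N - 1 + P) / N := by
    rw [Nat.le_div_iff_mul_le hN]
    omega
  omega

lemma rot_exists {N n k : ℕ} (hn : 1 ≤ n) (hNk : N = n + k) (e : Fin k → ℕ)
    (he : ∀ j, e j < N) (g : ℕ) :
    ∃ M : ℕ, (∀ j, (e j + M) % N < N - 1) ∧ ∑ j, (e j + M) / N + g = M := by
  have hN : 0 < N := by omega
  set F : ℕ → ℤ := fun M => M - ∑ j, (((e j + M) / N : ℕ) : ℤ) with hF
  have hex : ∃ M, (g : ℤ) < F M := by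
    refine ⟨N * (g + 1), ?_⟩
    have : ∀ j, (e j + N * (g + 1)) / N = g + 1 := by
      intro j
      rw [Nat.add_mul_div_left _ _ hN, Nat.div_eq_of_lt (he j), zero_add]
    simp only [hF, this]
    simp only [Finset.sum_const, Finset.card_univ, Fintype.card_fin]
    rw [hNk]
    push_cast
    simp only [nsmul_eq_mul]
    have : (1 : ℤ) ≤ n := by exact_mod_cast hn
    nlinarith
  have hF0 : F 0 = 0 := by
    simp only [hF]
    have : ∀ j, (e j + 0) / N = 0 := fun j => Nat.div_eq_of_lt (he j)
    simp only [this]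
    simp
  classical
  obtain ⟨M, hM1, hM2⟩ : ∃ M, F M ≤ g ∧ (g : ℤ) < F (M + 1) := by
    have hs := Nat.find_spec hex
    have hmn := fun m => @Nat.find_min _ _ hex m
    rcases hq : Nat.find hex with _ | M
    · rw [hq, hF0] at hs
      omega
    · refine ⟨M, ?_, ?_⟩
      · have := hmn M (by omega)
        omega
      · rwa [hq] at hs
  have hmono : ∀ j, (e j + M) / N ≤ (e j + (M + 1)) / N := fun j =>
    Nat.div_le_div_right (by omega)
  have hsum : ∑ j, (((e j + M) / N : ℕ) : ℤ) ≤ ∑ j, (((e j + (M + 1)) / N : ℕ) : ℤ) :=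
    Finset.sum_le_sum fun j _ => by exact_mod_cast hmono j
  have heq : ∑ j, (((e j + M) / N : ℕ) : ℤ) = ∑ j, (((e j + (M + 1)) / N : ℕ) : ℤ) := by
    simp only [hF] at hM1 hM2
    push_cast at hM1 hM2 hsum ⊢
    omega
  have hFM : F M = g := by
    simp only [hF] at hM1 hM2 ⊢
    push_cast at hM1 hM2 heq ⊢
    omega
  refine ⟨M, ?_, ?_⟩
  · intro j
    have h1 := (Finset.sum_eq_sum_iff_of_le (s := Finset.univ)
      (f := fun j => (((e j + M) / N : ℕ) : ℤ)) (g := fun j => (((e j + (M + 1)) / N : ℕ) : ℤ))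
      (fun j _ => by exact_mod_cast hmono j)).1 heq j (Finset.mem_univ _)
    have h2 : (e j + M) / N = (e j + (M + 1)) / N := by exact_mod_cast h1
    by_contra hc
    have h3 := Nat.mod_lt (e j + M) hN
    have h4 := Nat.div_add_mod (e j + M) N
    have h5 : e j + (M + 1) = N * ((e j + M) / N + 1) := by
      rw [mul_add]
      omega
    rw [h5, Nat.mul_div_cancel_left _ hN] at h2
    omega
  · simp only [hF] at hFM
    have : ((∑ j, (e j + M) / N + g : ℕ) : ℤ) = M := by
      push_cast at hFM ⊢
      omega
    exact_mod_cast this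

lemma betheRoot_eq (n k : ℕ) (t : ℂ) (σ : PartBox (n - 1) k) (j : Fin k) :
    betheRoot n k t σ j
      = t * EE (n + k) ((partSum σ : ℂ) / n + (1 - k) / 2 + aa σ j) := by
  unfold betheRoot zeta EE Imap aa
  congr 3
  push_cast
  ring

lemma part_i (n k : ℕ) (hn : 1 ≤ n) (hk : 1 ≤ k)
    (z : ℂ) (hz : z ≠ 0) (t : ℂ) (ht : t ^ n = z) (σ : PartBox (n - 1) k) :
    betheRoot n k t σ ∈ BAESol n k z := by
  have hN : 0 < n + k := by omega
  have hn0 : (n : ℂ) ≠ 0 := by exact_mod_cast (by omega : n ≠ 0)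
  have ht0 : t ≠ 0 := by
    rintro rfl
    rw [zero_pow (by omega)] at ht
    exact hz ht.symm
  refine ⟨fun i => ?_, fun i j h => ?_, fun i => ?_⟩
  · rw [betheRoot_eq]
    exact mul_ne_zero ht0 (EE_ne _ _)
  · rw [betheRoot_eq, betheRoot_eq] at h
    obtain ⟨m, hm⟩ := (EE_eq_iff hN _ _).1 (mul_left_cancel₀ ht0 h)
    have h1 : (aa σ i : ℂ) = aa σ j + m * (n + k : ℕ) := by linear_combination hm
    have h2 : (aa σ i : ℤ) = aa σ j + m * (n + k : ℕ) := by exact_mod_cast h1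
    have hi := aa_lt σ i
    have hj := aa_lt σ j
    have hm0 : m = 0 := by
      by_contra hne
      rcases lt_or_gt_of_ne hne with hlt | hgt
      · have : m * (n + k : ℕ) ≤ -1 * (n + k : ℕ) :=
          mul_le_mul_of_nonneg_right (by omega) (by positivity)
        omega
      · have : 1 * ((n + k : ℕ) : ℤ) ≤ m * (n + k : ℕ) :=
          mul_le_mul_of_nonneg_right (by omega) (by positivity)
        omega
    rw [hm0] at h2
    exact (aa_mono σ).injective (by simpa using h2)
  · simp only [betheRoot_eq]
    rw [Finset.prod_mul_distrib, EE_sum, EE_neg_one hN hk, mul_pow, EE_pow, pow_add, ht,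
      Finset.prod_const, Finset.card_univ, Fintype.card_fin]
    have : EE (n + k) (((n + k : ℕ) : ℂ) * (partSum σ / n + (1 - k) / 2 + aa σ i))
        = EE (n + k) (((n + k : ℕ) : ℂ) * (k - 1) / 2
          + ∑ j, ((partSum σ : ℂ) / n + (1 - k) / 2 + aa σ j)) := by
      rw [EE_eq_iff hN]
      refine ⟨aa σ i - (k - 1), ?_⟩
      rw [Finset.sum_add_distrib, aa_sum]
      simp only [Finset.sum_const, Finset.card_univ, Fintype.card_fin, nsmul_eq_mul]
      push_cast
      field_simp
      ring
    rw [this, EE_add]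
    ring

lemma part_inj (n k : ℕ) (hn : 1 ≤ n) (hk : 1 ≤ k)
    (t : ℂ) (ht0 : t ≠ 0) (σ τ : PartBox (n - 1) k) (π : Equiv.Perm (Fin k))
    (h : betheRoot n k t σ ∘ π = betheRoot n k t τ) :
    ∃ M : ℤ, ∃ m : Fin k → ℤ, ∑ j, m j = M ∧
      ∀ j, (aa τ j : ℤ) = aa σ (π j) + M - m j * (n + k : ℕ) := by
  have hN : 0 < n + k := by omega
  have hn0 : (n : ℂ) ≠ 0 := by exact_mod_cast (by omega : n ≠ 0)
  have h1 : ∀ j, ∃ m : ℤ, (partSum σ : ℂ) / n + (1 - k) / 2 + aa σ (π j)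
      = (partSum τ : ℂ) / n + (1 - k) / 2 + aa τ j + m * (n + k : ℕ) := by
    intro j
    have := congrFun h j
    simp only [Function.comp, betheRoot_eq] at this
    exact (EE_eq_iff hN _ _).1 (mul_left_cancel₀ ht0 this)
  choose m hm using h1
  refine ⟨_, m, rfl, fun j => ?_⟩
  have hs : ∑ j, ((partSum σ : ℂ) / n + (1 - k) / 2 + aa σ (π j))
      = ∑ j, ((partSum τ : ℂ) / n + (1 - k) / 2 + aa τ j + m j * (n + k : ℕ)) :=
    Finset.sum_congr rfl fun j _ => hm j
  simp only [Finset.sum_add_distrib, ← Finset.sum_mul] at hs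
  rw [Equiv.sum_comp π (fun j => (aa σ j : ℂ)), aa_sum, aa_sum] at hs
  simp only [Finset.sum_const, Finset.card_univ, Fintype.card_fin, nsmul_eq_mul] at hs
  have hnk : ((n + k : ℕ) : ℂ) ≠ 0 := by exact_mod_cast hN.ne'
  have hd : (partSum σ : ℂ) / n - (partSum τ : ℂ) / n = ∑ j, (m j : ℂ) := by
    apply mul_right_cancel₀ hnk
    have e1 : (partSum σ : ℂ) = n * (partSum σ / n) := by field_simp
    have e2 : (partSum τ : ℂ) = n * (partSum τ / n) := by field_simp
    push_cast at hs ⊢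
    linear_combination hs - e1 + e2
  have : (aa τ j : ℂ) = aa σ (π j) + ∑ j, (m j : ℂ) - m j * (n + k : ℕ) := by
    linear_combination hd - hm j
  exact_mod_cast this

lemma part_surj (n k : ℕ) (hn : 1 ≤ n) (hk : 1 ≤ k)
    (z : ℂ) (t : ℂ) (ht : t ^ n = z) (ht0 : t ≠ 0) (y : Fin k → ℂ) (hy : y ∈ BAESol n k z) :
    ∃ σ : PartBox (n - 1) k, ∃ π : Equiv.Perm (Fin k), y = betheRoot n k t σ ∘ π := by
  have hN : 0 < n + k := by omega
  have hn0 : (n : ℂ) ≠ 0 := by exact_mod_cast (by omega : n ≠ 0)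
  have hnk : ((n + k : ℕ) : ℂ) ≠ 0 := by exact_mod_cast hN.ne'
  obtain ⟨hy0, hyi, hyb⟩ := hy
  let i0 : Fin k := ⟨0, hk⟩
  obtain ⟨s, hs⟩ := EE_surj hN (div_ne_zero (hy0 i0) ht0)
  have he : ∀ j, ∃ e : ℕ, e < n + k ∧ y j = t * EE (n + k) (s + e) := by
    intro j
    obtain ⟨s', hs'⟩ := EE_surj hN (div_ne_zero (hy0 j) ht0)
    have e1 : EE (n + k) s' ^ (n + k) = EE (n + k) s ^ (n + k) := by
      rw [← hs, ← hs', div_pow, div_pow, hyb, hyb]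
    rw [EE_pow, EE_pow, EE_eq_iff hN] at e1
    obtain ⟨m, hm⟩ := e1
    have hm' : s' = s + m := by
      apply mul_left_cancel₀ hnk
      linear_combination hm
    have hpos : (0 : ℤ) < (n + k : ℕ) := by exact_mod_cast hN
    obtain ⟨e, he⟩ := Int.eq_ofNat_of_zero_le (Int.emod_nonneg m hpos.ne')
    refine ⟨e, ?_, ?_⟩
    · have := Int.emod_lt_of_pos m hpos
      omega
    · have : EE (n + k) (s + e) = EE (n + k) s' := by
        rw [EE_eq_iff hN]
        refine ⟨-(m / (n + k : ℕ)), ?_⟩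
        have h3 := Int.mul_ediv_add_emod m (n + k : ℕ)
        rw [he] at h3
        have h4 : (((n + k : ℕ) : ℂ)) * ((m / (n + k : ℕ) : ℤ) : ℂ) + (e : ℂ) = m := by
          exact_mod_cast h3
        rw [hm', ← h4]
        push_cast
        ring
      rw [this, ← hs']
      field_simp
  choose e hel hye using he
  have hb := hyb i0
  simp only [hye] at hb
  rw [Finset.prod_mul_distrib, EE_sum, EE_neg_one hN hk, mul_pow, EE_pow, pow_add, ht,
      Finset.prod_const, Finset.card_univ, Fintype.card_fin] at hb
  have hz : z ≠ 0 := by rw [← ht]; exact pow_ne_zero _ ht0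
  have hb2 : EE (n + k) (((n + k : ℕ) : ℂ) * (s + e i0))
      = EE (n + k) (((n + k : ℕ) : ℂ) * (k - 1) / 2 + ∑ j, (s + (e j : ℂ))) := by
    rw [EE_add]
    apply mul_left_cancel₀ (mul_ne_zero hz (pow_ne_zero k ht0))
    linear_combination hb
  rw [EE_eq_iff hN] at hb2
  obtain ⟨m0, hm0⟩ := hb2
  rw [Finset.sum_add_distrib] at hm0
  simp only [Finset.sum_const, Finset.card_univ, Fintype.card_fin, nsmul_eq_mul] at hm0
  obtain ⟨m, hm⟩ : ∃ m : ℤ, n * s = ((n + k : ℕ) : ℂ) * (k - 1) / 2 + ∑ j, (e j : ℂ)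
      + m * (n + k : ℕ) := by
    refine ⟨m0 - e i0, ?_⟩
    push_cast at hm0 ⊢
    linear_combination hm0
  have hnpos : (0 : ℤ) < n := by exact_mod_cast hn
  obtain ⟨g, hg⟩ := Int.eq_ofNat_of_zero_le (Int.emod_nonneg ((k : ℤ) - 1 + m) hnpos.ne')
  have hg2 : ∃ q : ℤ, (k : ℤ) - 1 + m = n * q + g := by
    refine ⟨((k : ℤ) - 1 + m) / n, ?_⟩
    have := Int.mul_ediv_add_emod ((k : ℤ) - 1 + m) n
    rw [hg] at this
    exact this.symm
  obtain ⟨q, hq⟩ := hg2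
  obtain ⟨M, hM1, hM2⟩ := rot_exists hn rfl e hel g
  set e' : Fin k → ℕ := fun j => (e j + M) % (n + k) with he'
  have hdiv : ∀ j, (e j : ℂ) + M = (n + k : ℕ) * (((e j + M) / (n + k) : ℕ) : ℂ) + e' j := by
    intro j
    have := (Nat.div_add_mod (e j + M) (n + k)).symm
    exact_mod_cast this
  have hye' : ∀ j, y j = t * EE (n + k) (s - M + e' j) := by
    intro j
    rw [hye j]
    congr 1
    rw [EE_eq_iff hN]
    refine ⟨(((e j + M) / (n + k) : ℕ) : ℤ), ?_⟩
    rw [Int.cast_natCast]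
    linear_combination hdiv j
  have hei : Function.Injective e' := by
    intro i j hij
    apply hyi
    rw [hye', hye', hij]
  have hsm : StrictMono (e' ∘ Tuple.sort e') :=
    (Tuple.monotone_sort e').strictMono_of_injective (hei.comp (Equiv.injective _))
  obtain ⟨σ, hσ⟩ := aa_surj (r := n - 1) (e' ∘ Tuple.sort e') hsm (fun j => by
    have := hM1 (Tuple.sort e' j)
    change e' (Tuple.sort e' j) < n + k - 1 at this
    simp only [Function.comp]
    omega)
  refine ⟨σ, (Tuple.sort e').symm, ?_⟩
  funext j
  simp only [Function.comp, betheRoot_eq, hσ, Equiv.apply_symm_apply]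
  rw [hye' j]
  congr 1
  rw [EE_eq_iff hN]
  refine ⟨q, ?_⟩
  have hsum : (∑ j, (e' j : ℂ)) = partSum σ + k * (k - 1) / 2 := by
    rw [← aa_sum, hσ]
    exact (Equiv.sum_comp (Tuple.sort e') (fun j => (e' j : ℂ))).symm
  have hsum2 : ∑ j, ((e j : ℂ) + M)
      = ∑ j, ((n + k : ℕ) * (((e j + M) / (n + k) : ℕ) : ℂ) + e' j) :=
    Finset.sum_congr rfl fun j _ => hdiv j
  rw [Finset.sum_add_distrib, Finset.sum_add_distrib, ← Finset.mul_sum, hsum] at hsum2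
  simp only [Finset.sum_const, Finset.card_univ, Fintype.card_fin, nsmul_eq_mul] at hsum2
  have hM3 : ∑ j, (((e j + M) / (n + k) : ℕ) : ℂ) + g = M := by exact_mod_cast hM2
  have hq' : (k : ℂ) - 1 + m = n * q + g := by exact_mod_cast hq
  have e1 : (partSum σ : ℂ) = n * (partSum σ / n) := by field_simp
  apply mul_left_cancel₀ hn0
  push_cast at hm hsum2 hM3 ⊢
  linear_combination hm + hsum2 + e1 + (n + k : ℂ) * hM3 + (n + k : ℂ) * hq'

/-- Classification of the solutions of the Bethe Ansatz equations:
(i) each `x_σ` is a solution with nonzero pairwise distinct entries;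
(ii) `σ ↦ S_k-orbit of x_σ` is a bijection onto the set of `S_k`-orbits of solutions;
(iii) the solution set is stable under multiplication of all coordinates by `e^{2πι/n}`. -/
theorem bethe_roots_classification (n k : ℕ) (hn : 1 ≤ n) (hk : 1 ≤ k) (hnk : 2 < n + k)
    (z : ℂ) (hz : z ≠ 0) (t : ℂ) (ht : t ^ n = z) :
    (∀ σ : PartBox (n - 1) k, betheRoot n k t σ ∈ BAESol n k z) ∧
    (∀ y ∈ BAESol n k z, ∃ σ : PartBox (n - 1) k, ∃ π : Equiv.Perm (Fin k),
        y = betheRoot n k t σ ∘ π) ∧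
    (∀ σ τ : PartBox (n - 1) k,
        (∃ π : Equiv.Perm (Fin k), betheRoot n k t σ ∘ π = betheRoot n k t τ) → σ = τ) ∧
    (∀ y ∈ BAESol n k z,
        (fun j => Complex.exp (2 * Real.pi * Complex.I / (n : ℂ)) * y j) ∈ BAESol n k z) := by
  have ht0 : t ≠ 0 := by
    rintro rfl
    rw [zero_pow (by omega)] at ht
    exact hz ht.symm
  refine ⟨part_i n k hn hk z hz t ht, part_surj n k hn hk z t ht ht0, ?_, ?_⟩
  · rintro σ τ ⟨π, hπ⟩
    have hN : 0 < n + k := by omega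
    have hl : ∀ (ρ : PartBox (n - 1) k) j, aa ρ j < n + k - 1 := by
      intro ρ j
      have := aa_lt ρ j
      omega
    obtain ⟨M, m, hM, h⟩ := part_inj n k hn hk t ht0 σ τ π hπ
    have h1 : M ≤ 0 := rot_nonpos hN (aa σ ∘ π) (aa τ)
      ((aa_mono σ).injective.comp π.injective) (fun j => hl σ _) (hl τ) m M hM h
    have h2 : -M ≤ 0 := rot_nonpos hN (aa τ) (aa σ ∘ π)
      (aa_mono τ).injective (hl τ) (fun j => hl σ _) (fun j => -m j) (-M)
      (by rw [Finset.sum_neg_distrib, hM]) (fun j => by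
        have := h j
        simp only [Function.comp]
        linarith)
    have hM0 : M = 0 := by omega
    have heq : ∀ j, aa τ j = aa σ (π j) := by
      intro j
      have h3 := h j
      rw [hM0] at h3
      have h4 := hl σ (π j)
      have h5 := hl τ j
      have : m j = 0 := by
        by_contra hne
        rcases lt_or_gt_of_ne hne with hlt | hgt
        · have : m j * (n + k : ℕ) ≤ -1 * (n + k : ℕ) :=
            mul_le_mul_of_nonneg_right (by omega) (by positivity)
          omega
        · have : 1 * ((n + k : ℕ) : ℤ) ≤ m j * (n + k : ℕ) :=
            mul_le_mul_of_nonneg_right (by omega) (by positivity)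
          omega
      rw [this] at h3
      omega
    apply aa_inj
    apply ((aa_mono σ).range_inj (aa_mono τ)).1
    have : aa τ = aa σ ∘ π := funext heq
    rw [this, Set.range_comp, π.surjective.range_eq, Set.image_univ]
  · rintro y ⟨h0, hi, hb⟩
    have hw : Complex.exp (2 * Real.pi * Complex.I / (n : ℂ)) ^ n = 1 := by
      rw [← Complex.exp_nat_mul]
      have hn0 : (n : ℂ) ≠ 0 := by exact_mod_cast (by omega : n ≠ 0)
      rw [mul_div_cancel₀ _ hn0, Complex.exp_two_pi_mul_I]
    refine ⟨fun i => mul_ne_zero (Complex.exp_ne_zero _) (h0 i), fun i j h => ?_, fun i => ?_⟩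
    · exact hi (mul_left_cancel₀ (Complex.exp_ne_zero _) h)
    · simp only
      rw [mul_pow, hb, pow_add, hw, Finset.prod_mul_distrib, Finset.prod_const,
        Finset.card_univ, Fintype.card_fin]
      ring
end
end
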